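/- arXiv:0911.0618 — 2 statements merged into one kernel-verified Lean document; each statement's English description precedes it below -/
import Mathlib

section
/- Sewing map associated with the heat semigroup (L^p version): let T > 0, μ > 1 and κ ∈ [0, μ]. Let h : S_T³ → L^p(ℝ^n) be continuous and satisfy (i) S_{t−v} h_{vus} − h_{tus} + h_{tvs} − h_{tvu} = 0 for all 0 ≤ s ≤ u ≤ v ≤ t ≤ T, and (ii) ‖h_{tus}‖_{L^p} ≤ C (t−u)^κ (u−s)^{μ−κ} for all (s,u,t) ∈ S_T³ and some constant C. Then there exists a unique continuous map Λh : S_T² → L^p(ℝ^n) such that sup_{0≤s<t≤T} ‖(Λh)_{ts}‖_{L^p}/(t−s)^μ < ∞ and δ̂(Λh) = h, i.e. (Λh)_{ts} − (Λh)_{tu} − S_{t−u}((Λh)_{us}) = h_{tus} for all 0 ≤ s ≤ u ≤ t ≤ T. Moreover the contraction bound sup_{s<t} ‖(Λh)_{ts}‖_{L^p}/(t−s)^μ ≤ c C holds for a constant c depending only on μ and T. -/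
open MeasureTheory Real
open scoped ENNReal

/-- The heat kernel on ℝ^n: `g_t(ξ) = (2πt)^(-n/2) exp(-|ξ|²/(2t))`. -/
noncomputable def heatKernel (n : ℕ) (t : ℝ) : EuclideanSpace ℝ (Fin n) → ℝ :=
  fun ξ => (2 * π * t) ^ (-(n : ℝ) / 2) * Real.exp (-‖ξ‖ ^ 2 / (2 * t))

/-- Convolution of two real functions on ℝ^n. -/
noncomputable def convol {n : ℕ} (f g : EuclideanSpace ℝ (Fin n) → ℝ) :
    EuclideanSpace ℝ (Fin n) → ℝ :=
  fun ξ => ∫ η, f η * g (ξ - η)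

/-- The Lebesgue space `L^p(ℝ^n)`. -/
abbrev LpR (n : ℕ) (p : ℝ) : Type :=
  Lp ℝ (ENNReal.ofReal p) (volume : Measure (EuclideanSpace ℝ (Fin n)))

section HeatKernel

open ProbabilityTheory Complex
open scoped MeasureTheory

theorem heatKernel_pos (n : ℕ) {t : ℝ} (ht : 0 < t) (ξ : EuclideanSpace ℝ (Fin n)) :
    0 < heatKernel n t ξ := by
  unfold heatKernel; positivity

theorem continuous_heatKernel (n : ℕ) (t : ℝ) : Continuous (heatKernel n t) := by
  unfold heatKernel; fun_prop

/-- The Gaussian measure with density the heat kernel at time `t`. -/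
noncomputable def heatMeasure (n : ℕ) (t : ℝ) : Measure (EuclideanSpace ℝ (Fin n)) :=
  volume.withDensity fun ξ => ENNReal.ofReal (heatKernel n t ξ)

theorem integral_heatMeasure {n : ℕ} {t : ℝ} (ht : 0 < t) {E : Type*} [NormedAddCommGroup E]
    [NormedSpace ℝ E] (f : EuclideanSpace ℝ (Fin n) → E) :
    ∫ η, f η ∂heatMeasure n t = ∫ η, heatKernel n t η • f η := by
  rw [heatMeasure, integral_withDensity_eq_integral_toReal_smul
    (continuous_heatKernel n t).measurable.ennreal_ofReal (by simp)]
  simp only [ENNReal.toReal_ofReal (heatKernel_pos n ht _).le]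

theorem charFun_heatMeasure {n : ℕ} {t : ℝ} (ht : 0 < t) (ξ : EuclideanSpace ℝ (Fin n)) :
    charFun (heatMeasure n t) ξ = cexp (-(t * ‖ξ‖ ^ 2 / 2 : ℝ)) := by
  have hb : 0 < ((1 / (2 * t) : ℝ) : ℂ).re := by rw [ofReal_re]; positivity
  have hc : (0 : ℝ) ≤ 2 * π * t := by positivity
  have hc' : 2 * π * t ≠ 0 := by positivity
  have hk : ((2 * π * t : ℝ) : ℂ) ^ (-(n : ℂ) / 2) * ((2 * π * t : ℝ) : ℂ) ^ ((n : ℂ) / 2) = 1 := by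
    rw [← cpow_add _ _ (by exact_mod_cast hc')]
    simp [neg_div]
  rw [charFun_apply, integral_heatMeasure ht]
  have key := GaussianFourier.integral_cexp_neg_mul_sq_norm_add hb I ξ
  have hb2 : (π : ℂ) / ((1 / (2 * t) : ℝ) : ℂ) = ((2 * π * t : ℝ) : ℂ) := by
    push_cast; field_simp
  rw [hb2, finrank_euclideanSpace_fin] at key
  calc _ = ∫ x, ((2 * π * t : ℝ) : ℂ) ^ (-(n : ℂ) / 2) *
        cexp (-((1 / (2 * t) : ℝ) : ℂ) * ‖x‖ ^ 2 + I * inner ℝ ξ x) := by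
        refine integral_congr_ae (.of_forall fun x => ?_)
        simp only [heatKernel, real_smul, Complex.exp_add]
        rw [ofReal_mul, ofReal_cpow hc, ofReal_exp, real_inner_comm]
        push_cast
        rw [mul_assoc, mul_comm I]
        congr 3
        ring
    _ = _ := by
        rw [integral_const_mul, key, ← mul_assoc, hk, one_mul]
        congr 1
        have : (t : ℂ) ≠ 0 := by exact_mod_cast ht.ne'
        push_cast
        rw [I_sq]
        field_simp
        ring

theorem integrable_heatKernel {n : ℕ} {t : ℝ} (ht : 0 < t) : Integrable (heatKernel n t) := by
  refine Integrable.const_mul ?_ _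
  have hb : 0 < ((1 / (2 * t) : ℝ) : ℂ).re := by rw [ofReal_re]; positivity
  have := (GaussianFourier.integrable_cexp_neg_mul_sq_norm_add (V := EuclideanSpace ℝ (Fin n))
    hb 0 0).norm
  refine this.congr (.of_forall fun x => ?_)
  simp only [norm_exp, zero_mul, add_zero]
  congr 1
  have : -((1 / (2 * t) : ℝ) : ℂ) * (‖x‖ : ℂ) ^ 2 = ((-‖x‖ ^ 2 / (2 * t) : ℝ) : ℂ) := by
    push_cast; ring
  rw [this, ofReal_re]

theorem isProbabilityMeasure_heatMeasure {n : ℕ} {t : ℝ} (ht : 0 < t) :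
    IsProbabilityMeasure (heatMeasure n t) := by
  have : IsFiniteMeasure (heatMeasure n t) :=
    isFiniteMeasure_withDensity_ofReal (integrable_heatKernel ht).2
  have h := charFun_heatMeasure (n := n) ht 0
  rw [charFun_zero] at h
  rw [isProbabilityMeasure_iff_real]
  simpa using h

theorem heatMeasure_conv {n : ℕ} {s t : ℝ} (hs : 0 < s) (ht : 0 < t) :
    heatMeasure n s ∗ heatMeasure n t = heatMeasure n (s + t) := by
  have := isProbabilityMeasure_heatMeasure (n := n) hs
  have := isProbabilityMeasure_heatMeasure (n := n) ht
  have := isProbabilityMeasure_heatMeasure (n := n) (add_pos hs ht)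
  refine Measure.ext_of_charFun (funext fun ξ => ?_)
  rw [charFun_conv, charFun_heatMeasure hs, charFun_heatMeasure ht,
    charFun_heatMeasure (add_pos hs ht), ← Complex.exp_add]
  congr 1
  push_cast
  ring

theorem heatMeasure_eq_map {n : ℕ} {t : ℝ} (ht : 0 < t) :
    heatMeasure n t = (heatMeasure n 1).map (fun η => √t • η) := by
  have := isProbabilityMeasure_heatMeasure (n := n) ht
  have := isProbabilityMeasure_heatMeasure (n := n) one_pos
  refine Measure.ext_of_charFun (funext fun ξ => ?_)
  rw [charFun_map_smul, charFun_heatMeasure ht, charFun_heatMeasure one_pos, norm_smul,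
    mul_pow, Real.norm_eq_abs, sq_abs, Real.sq_sqrt ht.le]
  simp

end HeatKernel

section Translation

variable {n : ℕ} {p : ℝ} [Fact (1 ≤ ENNReal.ofReal p)]

/-- Translation of an `L^p` function by `η`. -/
noncomputable def translateLp (n : ℕ) (p : ℝ) [Fact (1 ≤ ENNReal.ofReal p)]
    (η : EuclideanSpace ℝ (Fin n)) : LpR n p →ₗᵢ[ℝ] LpR n p :=
  Lp.compMeasurePreservingₗᵢ ℝ (fun ξ => ξ - η) (measurePreserving_sub_right volume η)

theorem translateLp_ae_eq (η : EuclideanSpace ℝ (Fin n)) (φ : LpR n p) :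
    translateLp n p η φ =ᵐ[volume] fun ξ => φ (ξ - η) :=
  Lp.coeFn_compMeasurePreserving φ (measurePreserving_sub_right volume η)

theorem translateLp_zero (φ : LpR n p) : translateLp n p 0 φ = φ := by
  refine Lp.ext ((translateLp_ae_eq 0 φ).trans ?_)
  simp

theorem translateLp_translateLp (η ζ : EuclideanSpace ℝ (Fin n)) (φ : LpR n p) :
    translateLp n p η (translateLp n p ζ φ) = translateLp n p (η + ζ) φ := by
  refine Lp.ext ((translateLp_ae_eq η _).trans (.trans ?_ (translateLp_ae_eq _ φ).symm))
  have h := (measurePreserving_sub_right volume η).quasiMeasurePreserving.ae_eq_comp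
    (translateLp_ae_eq ζ φ)
  filter_upwards [h] with ξ hξ
  simpa [sub_sub] using hξ

theorem continuous_translateLp (φ : LpR n p) : Continuous fun η => translateLp n p η φ := by
  let g : C(EuclideanSpace ℝ (Fin n), C(EuclideanSpace ℝ (Fin n), EuclideanSpace ℝ (Fin n))) :=
    (ContinuousMap.mk (fun a : EuclideanSpace ℝ (Fin n) × EuclideanSpace ℝ (Fin n) => a.2 - a.1)
      (by fun_prop)).curry
  exact continuous_const.compMeasurePreservingLp g.continuous
    (fun η => measurePreserving_sub_right volume η) ENNReal.ofReal_ne_top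

theorem integrable_translateLp (ν : Measure (EuclideanSpace ℝ (Fin n))) [IsFiniteMeasure ν]
    (φ : LpR n p) : Integrable (fun η => translateLp n p η φ) ν :=
  .of_bound (continuous_translateLp φ).aestronglyMeasurable ‖φ‖
    (.of_forall fun η => ((translateLp n p η).norm_map φ).le)

theorem integrableOn_Lp {A : Set (EuclideanSpace ℝ (Fin n))} (hA : volume A < ∞) (φ : LpR n p) :
    IntegrableOn φ A := by
  have : IsFiniteMeasure (volume.restrict A) := ⟨by simpa using hA⟩
  exact ((Lp.memLp φ).restrict A).integrable Fact.out

theorem exists_setIntegral_norm_le {A : Set (EuclideanSpace ℝ (Fin n))} (hA : volume A < ∞) :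
    ∃ K : ℝ, ∀ φ : LpR n p, ∫ ξ in A, ‖φ ξ‖ ≤ K * ‖φ‖ := by
  have hp : 1 ≤ p := by simpa using (Fact.out : 1 ≤ ENNReal.ofReal p)
  refine ⟨((volume.restrict A) Set.univ ^
    (1 / (1 : ℝ≥0∞).toReal - 1 / (ENNReal.ofReal p).toReal)).toReal, fun φ => ?_⟩
  have h := (eLpNorm_le_eLpNorm_mul_rpow_measure_univ (μ := volume.restrict A)
    (Fact.out : 1 ≤ ENNReal.ofReal p) (Lp.memLp φ).1.restrict).trans
    (mul_le_mul_left (eLpNorm_mono_measure φ Measure.restrict_le_self) _)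
  rw [eLpNorm_one_eq_lintegral_enorm] at h
  rw [integral_norm_eq_lintegral_enorm (Lp.memLp φ).1.restrict, Lp.norm_def, mul_comm,
    ← ENNReal.toReal_mul]
  refine ENNReal.toReal_mono (ENNReal.mul_ne_top (Lp.eLpNorm_ne_top φ) ?_) h
  refine ENNReal.rpow_ne_top_of_nonneg ?_ (by simpa using hA.ne)
  rw [ENNReal.toReal_ofReal (by positivity), ENNReal.toReal_one, div_one, sub_nonneg]
  exact (div_le_one (by positivity)).2 hp

/-- The integral over a set of finite measure is a continuous functional on `L^p`. -/
theorem exists_setIntegral_clm {A : Set (EuclideanSpace ℝ (Fin n))} (hA : volume A < ∞) :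
    ∃ ℓ : LpR n p →L[ℝ] ℝ, ∀ φ : LpR n p, ℓ φ = ∫ ξ in A, φ ξ := by
  obtain ⟨K, hK⟩ := exists_setIntegral_norm_le (p := p) hA
  refine ⟨LinearMap.mkContinuous ⟨⟨fun φ => ∫ ξ in A, φ ξ, fun φ ψ => ?_⟩, fun c φ => ?_⟩
    K fun φ => (norm_integral_le_integral_norm _).trans (hK φ), fun φ => rfl⟩
  · rw [← integral_add (integrableOn_Lp hA φ) (integrableOn_Lp hA ψ)]
    exact integral_congr_ae (ae_restrict_of_ae (Lp.coeFn_add φ ψ))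
  · rw [RingHom.id_apply, ← integral_smul]
    exact integral_congr_ae (ae_restrict_of_ae (Lp.coeFn_smul c φ))

theorem integral_translateLp_ae_eq (ν : Measure (EuclideanSpace ℝ (Fin n))) [IsFiniteMeasure ν]
    (φ : LpR n p) :
    ⇑(∫ η, translateLp n p η φ ∂ν) =ᵐ[volume] fun ξ => ∫ η, φ (ξ - η) ∂ν := by
  have hprod (A : Set (EuclideanSpace ℝ (Fin n))) (hA : volume A < ∞) :
      Integrable (fun x : EuclideanSpace ℝ (Fin n) × EuclideanSpace ℝ (Fin n) => φ (x.1 - x.2))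
        ((volume.restrict A).prod ν) := by
    have hm : StronglyMeasurable fun x : EuclideanSpace ℝ (Fin n) × EuclideanSpace ℝ (Fin n) =>
        φ (x.1 - x.2) := (Lp.stronglyMeasurable φ).comp_measurable (by fun_prop)
    have hτ (η) := ae_restrict_of_ae (s := A) (translateLp_ae_eq η φ)
    obtain ⟨K, hK⟩ := exists_setIntegral_norm_le (p := p) hA
    rw [integrable_prod_iff' hm.aestronglyMeasurable]
    refine ⟨.of_forall fun η => (integrableOn_Lp hA (translateLp n p η φ)).congr (hτ η), ?_⟩
    refine .of_bound hm.norm.integral_prod_left'.aestronglyMeasurable (K * ‖φ‖)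
      (.of_forall fun η => ?_)
    rw [Real.norm_of_nonneg (integral_nonneg fun _ => norm_nonneg _),
      ← (translateLp n p η).norm_map φ]
    exact (integral_congr_ae ((hτ η).mono fun ξ hξ => congrArg norm hξ.symm)).trans_le (hK _)
  refine ae_eq_of_forall_setIntegral_eq_of_sigmaFinite (fun A _ hA => integrableOn_Lp hA _)
    (fun A _ hA => (hprod A hA).integral_prod_left) fun A _ hA => ?_
  obtain ⟨ℓ, hℓ⟩ := exists_setIntegral_clm (p := p) hA
  rw [← hℓ, ← ℓ.integral_comp_comm (integrable_translateLp ν φ),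
    integral_integral_swap (f := fun ξ η => φ (ξ - η)) (hprod A hA)]
  refine integral_congr_ae (.of_forall fun η => ?_)
  simp only [hℓ]
  exact integral_congr_ae (ae_restrict_of_ae (translateLp_ae_eq η φ))

end Translation

section HeatSemigroup

variable {n : ℕ} {p : ℝ} [Fact (1 ≤ ENNReal.ofReal p)] {S : ℝ → LpR n p →L[ℝ] LpR n p}

theorem heat_eq_integral_translateLp
    (hS : ∀ t : ℝ, 0 < t → ∀ φ : LpR n p, ⇑(S t φ) =ᵐ[volume] convol (heatKernel n t) ⇑φ)
    {t : ℝ} (ht : 0 < t) (φ : LpR n p) :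
    S t φ = ∫ η, translateLp n p η φ ∂heatMeasure n t := by
  have := isProbabilityMeasure_heatMeasure (n := n) ht
  refine Lp.ext ((hS t ht φ).trans (.trans ?_ (integral_translateLp_ae_eq _ φ).symm))
  refine .of_forall fun ξ => ?_
  simp only [convol, integral_heatMeasure ht, smul_eq_mul]

theorem norm_heat_le (hS0 : S 0 = ContinuousLinearMap.id ℝ (LpR n p))
    (hS : ∀ t : ℝ, 0 < t → ∀ φ : LpR n p, ⇑(S t φ) =ᵐ[volume] convol (heatKernel n t) ⇑φ)
    {t : ℝ} (ht : 0 ≤ t) (φ : LpR n p) : ‖S t φ‖ ≤ ‖φ‖ := by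
  obtain rfl | ht := ht.eq_or_lt
  · simp [hS0]
  have := isProbabilityMeasure_heatMeasure (n := n) ht
  rw [heat_eq_integral_translateLp hS ht]
  refine (norm_integral_le_integral_norm _).trans ?_
  simp

theorem heat_add (hS0 : S 0 = ContinuousLinearMap.id ℝ (LpR n p))
    (hS : ∀ t : ℝ, 0 < t → ∀ φ : LpR n p, ⇑(S t φ) =ᵐ[volume] convol (heatKernel n t) ⇑φ)
    {s t : ℝ} (hs : 0 ≤ s) (ht : 0 ≤ t) (φ : LpR n p) : S (s + t) φ = S s (S t φ) := by
  obtain rfl | hs := hs.eq_or_lt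
  · simp [hS0]
  obtain rfl | ht := ht.eq_or_lt
  · simp [hS0]
  have := isProbabilityMeasure_heatMeasure (n := n) hs
  have := isProbabilityMeasure_heatMeasure (n := n) ht
  rw [heat_eq_integral_translateLp hS (add_pos hs ht), ← heatMeasure_conv hs ht,
    integral_conv (integrable_translateLp _ φ), heat_eq_integral_translateLp hS hs,
    heat_eq_integral_translateLp hS ht]
  refine integral_congr_ae (.of_forall fun η => ?_)
  have h := (translateLp n p η).toContinuousLinearMap.integral_comp_comm
    (integrable_translateLp (heatMeasure n t) φ)
  simpa [translateLp_translateLp] using h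

theorem continuousOn_heat (hS0 : S 0 = ContinuousLinearMap.id ℝ (LpR n p))
    (hS : ∀ t : ℝ, 0 < t → ∀ φ : LpR n p, ⇑(S t φ) =ᵐ[volume] convol (heatKernel n t) ⇑φ)
    (φ : LpR n p) : ContinuousOn (fun t => S t φ) (Set.Ici 0) := by
  have := isProbabilityMeasure_heatMeasure (n := n) one_pos
  have hc : Continuous fun t : ℝ => ∫ η, translateLp n p (√t • η) φ ∂heatMeasure n 1 := by
    refine continuous_of_dominated (bound := fun _ => ‖φ‖) (fun t => ?_) (fun t => ?_)
      (integrable_const _) (.of_forall fun η => ?_)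
    · exact ((continuous_translateLp φ).comp (continuous_const_smul _)).aestronglyMeasurable
    · exact .of_forall fun η => ((translateLp n p _).norm_map φ).le
    · exact (continuous_translateLp φ).comp (Real.continuous_sqrt.smul continuous_const)
  refine hc.continuousOn.congr fun t ht => ?_
  obtain rfl | ht := (Set.mem_Ici.1 ht).eq_or_lt
  · simp [hS0, translateLp_zero]
  · rw [heat_eq_integral_translateLp hS ht, heatMeasure_eq_map ht, integral_map (by fun_prop)
      (continuous_translateLp φ).aestronglyMeasurable]

end HeatSemigroup

section Sewing

open Filter Topology

/-- A strongly continuous contraction semigroup on a normed space, indexed by `t ≥ 0`. -/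
structure IsContractionSemigroup {E : Type*} [NormedAddCommGroup E] [NormedSpace ℝ E]
    (S : ℝ → E →L[ℝ] E) : Prop where
  zero_apply : ∀ x, S 0 x = x
  add_apply : ∀ {s t : ℝ}, 0 ≤ s → 0 ≤ t → ∀ x, S (s + t) x = S s (S t x)
  norm_le : ∀ {t : ℝ}, 0 ≤ t → ∀ x, ‖S t x‖ ≤ ‖x‖
  continuousOn : ∀ x, ContinuousOn (fun t => S t x) (Set.Ici 0)

/-- The twisted Riemann sum `∑ i < N, S ((N - 1 - i) δ) B (s + (i + 1) δ) (s + i δ)`. -/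
noncomputable def twistedSum {E : Type*} [NormedAddCommGroup E] [NormedSpace ℝ E]
    (S : ℝ → E →L[ℝ] E) (B : ℝ → ℝ → E) (s δ : ℝ) : ℕ → E
  | 0 => 0
  | N + 1 => S δ (twistedSum S B s δ N) + B (s + (N + 1) * δ) (s + N * δ)

theorem rpow_add_rpow_le {μ a b : ℝ} (hμ : 1 < μ) (ha : 0 ≤ a) (hb : 0 ≤ b)
    (ha' : a ≤ 2 / 3 * (a + b)) (hb' : b ≤ 2 / 3 * (a + b)) :
    a ^ μ + b ^ μ ≤ (2 / 3) ^ (μ - 1) * (a + b) ^ μ := by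
  have hsplit {x : ℝ} (hx : 0 ≤ x) : x ^ μ = x * x ^ (μ - 1) := by
    rw [← Real.rpow_one_add' hx (by linarith)]; congr 1; ring
  have hle {x : ℝ} (hx : 0 ≤ x) (hx' : x ≤ 2 / 3 * (a + b)) :
      x ^ μ ≤ x * ((2 / 3) ^ (μ - 1) * (a + b) ^ (μ - 1)) := by
    rw [hsplit hx, ← Real.mul_rpow (by norm_num) (by positivity)]
    gcongr
  calc a ^ μ + b ^ μ ≤ _ := add_le_add (hle ha ha') (hle hb hb')
    _ = _ := by rw [hsplit (add_nonneg ha hb)]; ring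

/-- The constant in the sewing estimate. -/
noncomputable def sewingConst (μ : ℝ) : ℝ := (1 - (2 / 3) ^ (μ - 1))⁻¹

theorem one_sub_rpow_pos {μ : ℝ} (hμ : 1 < μ) : 0 < 1 - (2 / 3 : ℝ) ^ (μ - 1) :=
  sub_pos.2 (Real.rpow_lt_one (by norm_num) (by norm_num) (by linarith))

theorem sewingConst_pos {μ : ℝ} (hμ : 1 < μ) : 0 < sewingConst μ :=
  inv_pos.2 (one_sub_rpow_pos hμ)

theorem sewingConst_eq {μ : ℝ} (hμ : 1 < μ) :
    1 + sewingConst μ * (2 / 3) ^ (μ - 1) = sewingConst μ := by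
  have := (one_sub_rpow_pos hμ).ne'
  rw [sewingConst]
  field_simp
  ring

theorem tendsto_mul_div_rpow {μ : ℝ} (hμ : 1 < μ) (K x : ℝ) (hx : 0 ≤ x) :
    Tendsto (fun N : ℕ => (N : ℝ) * (K * (x / N) ^ μ)) atTop (𝓝 0) := by
  have h : Tendsto (fun N : ℕ => K * x ^ μ * (N : ℝ) ^ (-(μ - 1))) atTop (𝓝 (K * x ^ μ * 0)) :=
    ((tendsto_rpow_neg_atTop (by linarith)).comp tendsto_natCast_atTop_atTop).const_mul _
  rw [mul_zero] at h
  refine h.congr' ?_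
  filter_upwards [eventually_gt_atTop 0] with N hN
  have hN : (0 : ℝ) < N := by exact_mod_cast hN
  rw [Real.div_rpow hx hN.le, neg_sub, Real.rpow_sub hN, Real.rpow_one]
  ring

variable {E : Type*} [NormedAddCommGroup E] [NormedSpace ℝ E]
  {S : ℝ → E →L[ℝ] E} {B : ℝ → ℝ → E} {T μ C : ℝ}

namespace IsContractionSemigroup

theorem continuousOn_prod (hS : IsContractionSemigroup S) :
    ContinuousOn (fun q : ℝ × E => S q.1 q.2) (Set.Ici 0 ×ˢ Set.univ) := by
  refine continuousOn_prod_of_continuousOn_lipschitzOnWith' _ 1 (fun t ht => ?_)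
    fun x _ => hS.continuousOn x
  refine LipschitzOnWith.of_dist_le_mul fun x _ y _ => ?_
  rw [NNReal.coe_one, one_mul, dist_eq_norm, dist_eq_norm, ← map_sub]
  exact hS.norm_le ht _

theorem comp_continuousOn {α : Type*} [TopologicalSpace α] (hS : IsContractionSemigroup S)
    {A : Set α} {f : α → ℝ} {g : α → E} (hf : ContinuousOn f A) (hg : ContinuousOn g A)
    (hf0 : ∀ a ∈ A, 0 ≤ f a) : ContinuousOn (fun a => S (f a) (g a)) A :=
  hS.continuousOn_prod.comp (hf.prodMk hg) fun a ha => ⟨hf0 a ha, trivial⟩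

theorem twistedSum_add (hS : IsContractionSemigroup S) {δ : ℝ} (hδ : 0 ≤ δ) (s : ℝ) (j k : ℕ) :
    twistedSum S B s δ (j + k) =
      S (k * δ) (twistedSum S B s δ j) + twistedSum S B (s + j * δ) δ k := by
  induction k with
  | zero => simp [twistedSum, hS.zero_apply]
  | succ k ih =>
    rw [← add_assoc, twistedSum, ih, twistedSum, map_add, ← hS.add_apply hδ (by positivity),
      add_assoc]
    push_cast
    ring_nf

/-- Uniform sewing estimate for equidistant partitions. -/
theorem norm_sub_twistedSum_le (hS : IsContractionSemigroup S) (hμ : 1 < μ) (hC : 0 ≤ C)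
    (hB : ∀ s u t : ℝ, 0 ≤ s → s ≤ u → u ≤ t → t ≤ T →
      ‖B t s - B t u - S (t - u) (B u s)‖ ≤ C * (t - s) ^ μ)
    {k : ℕ} (hk : 1 ≤ k) {s δ : ℝ} (hs : 0 ≤ s) (hδ : 0 ≤ δ) (hT : s + k * δ ≤ T) :
    ‖B (s + k * δ) s - twistedSum S B s δ k‖ ≤ sewingConst μ * C * (k * δ) ^ μ := by
  have hK := sewingConst_pos hμ
  induction k using Nat.strong_induction_on generalizing s with
  | _ k ih =>
  obtain rfl | hk2 := hk.eq_or_lt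
  · simp only [twistedSum, map_zero, zero_add, Nat.cast_zero, zero_mul, add_zero, Nat.cast_one,
      sub_self, norm_zero]
    positivity
  obtain ⟨i, j, rfl, hi, hj, hij, hji⟩ :
      ∃ i j : ℕ, k = i + j ∧ 1 ≤ i ∧ 1 ≤ j ∧ i ≤ 2 * j ∧ j ≤ 2 * i :=
    ⟨k / 2, k - k / 2, by omega, by omega, by omega, by omega, by omega⟩
  have hij' : (i : ℝ) ≤ 2 * j := by exact_mod_cast hij
  have hji' : (j : ℝ) ≤ 2 * i := by exact_mod_cast hji
  have hiδ : 0 ≤ i * δ := by positivity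
  have hjδ : 0 ≤ j * δ := by positivity
  have ht : s + ((i + j : ℕ) : ℝ) * δ = s + i * δ + j * δ := by push_cast; ring
  have hx : ((i + j : ℕ) : ℝ) * δ = i * δ + j * δ := by push_cast; ring
  rw [ht] at hT ⊢
  have h1 := ih i (by omega) hi hs (by linarith)
  have h2 := ih j (by omega) hj (s := s + i * δ) (by linarith) hT
  have h3 := hB s (s + i * δ) (s + i * δ + j * δ) hs (by linarith) (by linarith) hT
  have h4 := (hS.norm_le hjδ (B (s + i * δ) s - twistedSum S B s δ i)).trans h1
  have h5 := rpow_add_rpow_le hμ hiδ hjδ (by nlinarith) (by nlinarith)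
  rw [hx, hS.twistedSum_add hδ]
  rw [add_sub_cancel_left] at h3
  rw [show s + i * δ + j * δ - s = i * δ + j * δ by ring] at h3
  rw [map_sub] at h4
  calc _ = ‖(B (s + i * δ + j * δ) s - B (s + i * δ + j * δ) (s + i * δ)
          - S (j * δ) (B (s + i * δ) s))
        + (B (s + i * δ + j * δ) (s + i * δ) - twistedSum S B (s + i * δ) δ j)
        + (S (j * δ) (B (s + i * δ) s) - S (j * δ) (twistedSum S B s δ i))‖ := by
        congr 1; abel
    _ ≤ C * (i * δ + j * δ) ^ μ + sewingConst μ * C * (j * δ) ^ μ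
        + sewingConst μ * C * (i * δ) ^ μ := norm_add₃_le.trans (by gcongr)
    _ = C * (i * δ + j * δ) ^ μ + sewingConst μ * C * ((i * δ) ^ μ + (j * δ) ^ μ) := by ring
    _ ≤ C * (i * δ + j * δ) ^ μ +
        sewingConst μ * C * ((2 / 3) ^ (μ - 1) * (i * δ + j * δ) ^ μ) := by gcongr
    _ = (1 + sewingConst μ * (2 / 3) ^ (μ - 1)) * C * (i * δ + j * δ) ^ μ := by ring
    _ = _ := by rw [sewingConst_eq hμ]

theorem norm_twistedSum_sub_twistedSum_le (hS : IsContractionSemigroup S) (hμ : 1 < μ)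
    (hC : 0 ≤ C)
    (hB : ∀ s u t : ℝ, 0 ≤ s → s ≤ u → u ≤ t → t ≤ T →
      ‖B t s - B t u - S (t - u) (B u s)‖ ≤ C * (t - s) ^ μ)
    {k : ℕ} (hk : 1 ≤ k) {s δ : ℝ} (hs : 0 ≤ s) (hδ : 0 ≤ δ) (N : ℕ)
    (hT : s + N * (k * δ) ≤ T) :
    ‖twistedSum S B s (k * δ) N - twistedSum S B s δ (N * k)‖ ≤
      N * (sewingConst μ * C * (k * δ) ^ μ) := by
  induction N with
  | zero => simp [twistedSum]
  | succ N ih =>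
    have hkδ : 0 ≤ k * δ := by positivity
    push_cast at hT
    have h1 := ih (by linarith)
    have h2 := hS.norm_sub_twistedSum_le hμ hC hB hk (s := s + N * (k * δ)) (by positivity) hδ
      (by linarith)
    have h3 := (hS.norm_le hkδ _).trans h1
    rw [map_sub] at h3
    rw [add_one_mul, hS.twistedSum_add hδ, twistedSum, add_sub_add_comm]
    refine (norm_add_le _ _).trans ?_
    refine (add_le_add h3 (d := sewingConst μ * C * (k * δ) ^ μ) ?_).trans_eq
      (by push_cast; ring)
    rwa [show s + (N + 1) * (k * δ) = s + N * (k * δ) + k * δ by ring,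
      show s + (N * k : ℕ) * δ = s + N * (k * δ) by push_cast; ring]

theorem norm_uniform_sub_uniform_le (hS : IsContractionSemigroup S) (hμ : 1 < μ) (hC : 0 ≤ C)
    (hB : ∀ s u t : ℝ, 0 ≤ s → s ≤ u → u ≤ t → t ≤ T →
      ‖B t s - B t u - S (t - u) (B u s)‖ ≤ C * (t - s) ^ μ)
    {s t : ℝ} (hs : 0 ≤ s) (hst : s ≤ t) (ht : t ≤ T) {N k : ℕ} (hN : 1 ≤ N) (hk : 1 ≤ k) :
    ‖twistedSum S B s ((t - s) / N) N - twistedSum S B s ((t - s) / (N * k : ℕ)) (N * k)‖ ≤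
      N * (sewingConst μ * C * (T / N) ^ μ) := by
  have hN' : (0 : ℝ) < N := by exact_mod_cast hN
  have hk' : (0 : ℝ) < k := by exact_mod_cast hk
  have hts := sub_nonneg.2 hst
  have hK := sewingConst_pos hμ
  have hδ : k * ((t - s) / (N * k : ℕ)) = (t - s) / N := by push_cast; field_simp
  have h := hS.norm_twistedSum_sub_twistedSum_le hμ hC hB hk hs
    (δ := (t - s) / (N * k : ℕ)) (by positivity) N
    (by rw [hδ, mul_div_cancel₀ _ hN'.ne']; linarith)
  rw [hδ] at h
  refine h.trans ?_
  gcongr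
  linarith

theorem dist_uniform_le (hS : IsContractionSemigroup S) (hμ : 1 < μ) (hC : 0 ≤ C)
    (hB : ∀ s u t : ℝ, 0 ≤ s → s ≤ u → u ≤ t → t ≤ T →
      ‖B t s - B t u - S (t - u) (B u s)‖ ≤ C * (t - s) ^ μ)
    {s t : ℝ} (hs : 0 ≤ s) (hst : s ≤ t) (ht : t ≤ T) {N M : ℕ} (hN : 1 ≤ N) (hM : 1 ≤ M) :
    dist (twistedSum S B s ((t - s) / N) N) (twistedSum S B s ((t - s) / M) M) ≤
      N * (sewingConst μ * C * (T / N) ^ μ) + M * (sewingConst μ * C * (T / M) ^ μ) := by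
  have h1 := hS.norm_uniform_sub_uniform_le hμ hC hB hs hst ht hN hM
  have h2 := hS.norm_uniform_sub_uniform_le hμ hC hB hs hst ht hM hN
  rw [mul_comm M N] at h2
  rw [← dist_eq_norm] at h1 h2
  exact (dist_triangle_right _ _ _).trans (add_le_add h1 h2)

theorem continuousOn_twistedSum (hS : IsContractionSemigroup S)
    (hBc : ContinuousOn (fun q : ℝ × ℝ => B q.1 q.2) {q | 0 ≤ q.2 ∧ q.2 ≤ q.1 ∧ q.1 ≤ T})
    {M N : ℕ} (hNM : N ≤ M) :
    ContinuousOn (fun q : ℝ × ℝ => twistedSum S B q.2 ((q.1 - q.2) / M) N)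
      {q | 0 ≤ q.2 ∧ q.2 ≤ q.1 ∧ q.1 ≤ T} := by
  induction N with
  | zero => exact continuousOn_const
  | succ N ih =>
    have hM : (0 : ℝ) < M := by exact_mod_cast (by omega : 0 < M)
    have hNM' : (N : ℝ) + 1 ≤ M := by exact_mod_cast hNM
    refine (hS.comp_continuousOn (by fun_prop) (ih (by omega)) fun q hq => ?_).add
      (hBc.comp (f := fun q : ℝ × ℝ => (q.2 + (N + 1) * ((q.1 - q.2) / M),
        q.2 + N * ((q.1 - q.2) / M))) (by fun_prop) fun q hq => ?_)
    · exact div_nonneg (sub_nonneg.2 hq.2.1) hM.le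
    · obtain ⟨h0, h1, h2⟩ := hq
      have hd : 0 ≤ (q.1 - q.2) / M := div_nonneg (sub_nonneg.2 h1) hM.le
      have hle : (N + 1) * ((q.1 - q.2) / M) ≤ M * ((q.1 - q.2) / M) := by gcongr
      rw [mul_div_cancel₀ _ hM.ne'] at hle
      exact ⟨by positivity, by dsimp only; linarith, by dsimp only; linarith⟩

/-- Existence part of the sewing lemma: an almost additive two-parameter map is close to an
additive one. -/
theorem exists_additive [CompleteSpace E] (hS : IsContractionSemigroup S) (hμ : 1 < μ)
    (hC : 0 ≤ C) (hT : 0 ≤ T)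
    (hBc : ContinuousOn (fun q : ℝ × ℝ => B q.1 q.2) {q | 0 ≤ q.2 ∧ q.2 ≤ q.1 ∧ q.1 ≤ T})
    (hB : ∀ s u t : ℝ, 0 ≤ s → s ≤ u → u ≤ t → t ≤ T →
      ‖B t s - B t u - S (t - u) (B u s)‖ ≤ C * (t - s) ^ μ) :
    ∃ I : ℝ → ℝ → E,
      ContinuousOn (fun q : ℝ × ℝ => I q.1 q.2) {q | 0 ≤ q.2 ∧ q.2 ≤ q.1 ∧ q.1 ≤ T} ∧
      (∀ s u t : ℝ, 0 ≤ s → s ≤ u → u ≤ t → t ≤ T → I t u + S (t - u) (I u s) = I t s) ∧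
      ∀ s t : ℝ, 0 ≤ s → s ≤ t → t ≤ T →
        ‖B t s - I t s‖ ≤ sewingConst μ * C * (t - s) ^ μ := by
  let P : ℕ → ℝ → ℝ → E := fun N t s => twistedSum S B s ((t - s) / N) N
  let e : ℕ → ℝ := fun N => N * (sewingConst μ * C * (T / N) ^ μ)
  have he : Tendsto e atTop (𝓝 0) := tendsto_mul_div_rpow hμ _ T hT
  have hP {s t : ℝ} (hs : 0 ≤ s) (hst : s ≤ t) (ht : t ≤ T) {N M : ℕ} (hN : 1 ≤ N)
      (hM : 1 ≤ M) : dist (P N t s) (P M t s) ≤ e N + e M :=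
    hS.dist_uniform_le hμ hC hB hs hst ht hN hM
  have hlim : ∀ s t : ℝ, ∃ x, 0 ≤ s → s ≤ t → t ≤ T →
      Tendsto (fun N => P N t s) atTop (𝓝 x) := by
    intro s t
    by_cases h : 0 ≤ s ∧ s ≤ t ∧ t ≤ T
    · obtain ⟨hs, hst, ht⟩ := h
      have hc : CauchySeq fun N => P N t s := by
        refine Metric.cauchySeq_iff.2 fun ε hε => ?_
        obtain ⟨N₀, hN₀⟩ := eventually_atTop.1 (he.eventually_lt_const (half_pos hε))
        refine ⟨max N₀ 1, fun M hM N hN => ?_⟩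
        have hM' := hN₀ M (le_of_max_le_left hM)
        have hN' := hN₀ N (le_of_max_le_left hN)
        exact (hP hs hst ht (le_of_max_le_right hM) (le_of_max_le_right hN)).trans_lt
          (by linarith)
      obtain ⟨x, hx⟩ := cauchySeq_tendsto_of_complete hc
      exact ⟨x, fun _ _ _ => hx⟩
    · exact ⟨0, fun h1 h2 h3 => absurd ⟨h1, h2, h3⟩ h⟩
  choose J hJ using hlim
  let I : ℝ → ℝ → E := fun t s => J s t
  have hI {s t : ℝ} (hs : 0 ≤ s) (hst : s ≤ t) (ht : t ≤ T) :
      Tendsto (fun N => P N t s) atTop (𝓝 (I t s)) := hJ s t hs hst ht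
  have hdist {s t : ℝ} (hs : 0 ≤ s) (hst : s ≤ t) (ht : t ≤ T) {N : ℕ} (hN : 1 ≤ N) :
      dist (P N t s) (I t s) ≤ e N := by
    have h := he.const_add (e N)
    rw [add_zero] at h
    refine le_of_tendsto_of_tendsto (tendsto_const_nhds.dist (hI hs hst ht)) h ?_
    filter_upwards [eventually_ge_atTop 1] with M hM using hP hs hst ht hN hM
  have hIc : ContinuousOn (fun q : ℝ × ℝ => I q.1 q.2)
      {q | 0 ≤ q.2 ∧ q.2 ≤ q.1 ∧ q.1 ≤ T} := by
    refine TendstoUniformlyOn.continuousOn (F := fun N (q : ℝ × ℝ) => P N q.1 q.2) (p := atTop)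
      (Metric.tendstoUniformlyOn_iff.2 fun ε hε => ?_)
      (Frequently.of_forall fun N => hS.continuousOn_twistedSum hBc le_rfl)
    filter_upwards [he.eventually_lt_const hε, eventually_ge_atTop 1] with N hN hN1 q hq
    rw [dist_comm]
    exact (hdist hq.1 hq.2.1 hq.2.2 hN1).trans_lt hN
  have hbound (s t : ℝ) (hs : 0 ≤ s) (hst : s ≤ t) (ht : t ≤ T) :
      ‖B t s - I t s‖ ≤ sewingConst μ * C * (t - s) ^ μ := by
    refine le_of_tendsto ((hI hs hst ht).const_sub _).norm ?_
    filter_upwards [eventually_ge_atTop 1] with N hN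
    have hN' : (0 : ℝ) < N := by exact_mod_cast hN
    have hNd : N * ((t - s) / N) = t - s := mul_div_cancel₀ _ hN'.ne'
    have h := hS.norm_sub_twistedSum_le hμ hC hB hN hs
      (div_nonneg (sub_nonneg.2 hst) hN'.le) (by rw [hNd]; linarith)
    rwa [hNd, add_sub_cancel] at h
  have hdiag {s : ℝ} (hs : 0 ≤ s) (hsT : s ≤ T) : I s s = 0 := by
    have h1 := hB s s s hs le_rfl le_rfl hsT
    have h2 := hbound s s hs le_rfl hsT
    have hμ0 : μ ≠ 0 := by linarith
    simp only [sub_self, Real.zero_rpow hμ0, mul_zero, norm_le_zero_iff, hS.zero_apply,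
      zero_sub, neg_eq_zero] at h1 h2
    simpa [h1] using h2
  have hrat {s d : ℝ} {a b : ℕ} (ha : 1 ≤ a) (hb : 1 ≤ b) (hs : 0 ≤ s) (hd : 0 ≤ d)
      (ht : s + a * d + b * d ≤ T) :
      I (s + a * d + b * d) (s + a * d) + S (b * d) (I (s + a * d) s)
        = I (s + a * d + b * d) s := by
    have had : 0 ≤ a * d := by positivity
    have hbd : 0 ≤ b * d := by positivity
    have hmul {c : ℕ} (hc : 1 ≤ c) : Tendsto (fun k : ℕ => c * k) atTop atTop :=
      tendsto_id.const_mul_atTop' (by omega)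
    have h1 := (hI (s := s + a * d) (t := s + a * d + b * d) (by positivity) (by linarith)
      ht).comp (hmul hb)
    have h2 := (hI (s := s) (t := s + a * d) hs (by linarith) (by linarith)).comp (hmul ha)
    have h3 := (hI (s := s) (t := s + a * d + b * d) hs (by linarith) ht).comp
      (hmul (c := a + b) (by omega))
    refine tendsto_nhds_unique
      ((h1.add (((S (b * d)).continuous.tendsto _).comp h2)).congr' ?_) h3
    filter_upwards [eventually_ge_atTop 1] with k hk
    have hk' : (0 : ℝ) < k := by exact_mod_cast hk
    have ha' : (0 : ℝ) < a := by exact_mod_cast ha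
    have hb' : (0 : ℝ) < b := by exact_mod_cast hb
    have e1 : (s + a * d + b * d - (s + a * d)) / (b * k : ℕ) = d / k := by
      push_cast; field_simp; ring
    have e2 : (s + a * d - s) / (a * k : ℕ) = d / k := by
      push_cast; field_simp; ring
    have e3 : (s + a * d + b * d - s) / ((a + b) * k : ℕ) = d / k := by
      push_cast; field_simp; ring
    have h := hS.twistedSum_add (B := B) (div_nonneg hd hk'.le) s (a * k) (b * k)
    have e4 : ((a * k : ℕ) : ℝ) * (d / k) = a * d := by push_cast; field_simp
    have e5 : ((b * k : ℕ) : ℝ) * (d / k) = b * d := by push_cast; field_simp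
    simp only [Function.comp_apply, P, e1, e2, e3]
    rw [add_mul, h, e4, e5, add_comm]
  refine ⟨I, hIc, fun s u t hs hsu hut ht => ?_, hbound⟩
  obtain rfl | hsu' := hsu.eq_or_lt
  · rw [hdiag hs (hut.trans ht), map_zero, add_zero]
  obtain rfl | hut' := hut.eq_or_lt
  · rw [hdiag (hs.trans hsu) ht, sub_self, hS.zero_apply, zero_add]
  have hst : 0 < t - s := by linarith
  let θ : ℝ := (u - s) / (t - s)
  have hθ0 : 0 < θ := div_pos (by linarith) hst
  have hθ1 : θ < 1 := (div_lt_one hst).2 (by linarith)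
  let w : ℕ → ℝ := fun N => (⌊θ * N⌋₊ : ℝ) / N
  have hw : Tendsto w atTop (𝓝 θ) :=
    (tendsto_nat_floor_mul_div_atTop hθ0.le).comp tendsto_natCast_atTop_atTop
  have hv : Tendsto (fun N => s + w N * (t - s)) atTop (𝓝 u) := by
    have h := (hw.mul_const (t - s)).const_add s
    rwa [show s + θ * (t - s) = u by simp only [θ]; field_simp; ring] at h
  have hf : ContinuousOn (fun v => I t v + S (t - v) (I v s)) (Set.Icc s t) := by
    refine .add (hIc.comp (f := fun v => (t, v)) (by fun_prop) fun v hv => ?_)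
      (hS.comp_continuousOn (by fun_prop)
        (hIc.comp (f := fun v => (v, s)) (by fun_prop) fun v hv => ?_) fun v hv => ?_)
    · exact ⟨hs.trans hv.1, hv.2, ht⟩
    · exact ⟨hs, hv.1, hv.2.trans ht⟩
    · exact sub_nonneg.2 hv.2
  have hfu : ContinuousAt (fun v => I t v + S (t - v) (I v s)) u :=
    hf.continuousAt (Icc_mem_nhds hsu' hut')
  refine tendsto_nhds_unique (hfu.tendsto.comp hv) (tendsto_const_nhds.congr' ?_)
  filter_upwards [hw.eventually_const_lt hθ0, hw.eventually_lt_const hθ1,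
    eventually_gt_atTop 0] with N hN0 hN1 hN
  have hN' : (0 : ℝ) < N := by exact_mod_cast hN
  have hlt : ⌊θ * N⌋₊ < N := by exact_mod_cast (div_lt_one hN').1 hN1
  have hpos : 1 ≤ ⌊θ * N⌋₊ := by
    by_contra h0
    simp [w, Nat.lt_one_iff.1 (not_le.1 h0)] at hN0
  have h := hrat (s := s) (d := (t - s) / N) (a := ⌊θ * N⌋₊) (b := N - ⌊θ * N⌋₊) hpos (by omega)
    hs (by positivity)
  rw [Nat.cast_sub hlt.le, show s + (⌊θ * N⌋₊ : ℝ) * ((t - s) / N)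
    + ((N : ℝ) - ⌊θ * N⌋₊) * ((t - s) / N) = t by field_simp; ring] at h
  rw [show ((N : ℝ) - ⌊θ * N⌋₊) * ((t - s) / N) = t - (s + w N * (t - s)) by
    simp only [w]; field_simp; ring, show (⌊θ * N⌋₊ : ℝ) * ((t - s) / N) = w N * (t - s) by
    simp only [w]; ring] at h
  exact (h ht).symm

/-- Uniqueness part of the sewing lemma. -/
theorem eq_zero_of_additive (hS : IsContractionSemigroup S) (hμ : 1 < μ) {D : ℝ → ℝ → E} {K : ℝ}
    (hD : ∀ s u t : ℝ, 0 ≤ s → s ≤ u → u ≤ t → t ≤ T → D t u + S (t - u) (D u s) = D t s)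
    (hK : ∀ s t : ℝ, 0 ≤ s → s ≤ t → t ≤ T → ‖D t s‖ ≤ K * (t - s) ^ μ)
    {s t : ℝ} (hs : 0 ≤ s) (hst : s ≤ t) (ht : t ≤ T) : D t s = 0 := by
  have hμ0 : μ ≠ 0 := by linarith
  have hN (N : ℕ) {δ : ℝ} (hδ : 0 ≤ δ) (hT : s + N * δ ≤ T) :
      ‖D (s + N * δ) s‖ ≤ N * (K * δ ^ μ) := by
    induction N with
    | zero => simpa [hμ0] using hK s s hs le_rfl (by simpa using hT)
    | succ N ih =>
      have hNδ : 0 ≤ N * δ := by positivity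
      have e : s + (N + 1 : ℕ) * δ = s + N * δ + δ := by push_cast; ring
      rw [e] at hT ⊢
      rw [← hD s (s + N * δ) (s + N * δ + δ) hs (by linarith) (by linarith) hT,
        add_sub_cancel_left]
      have h1 := hK (s + N * δ) (s + N * δ + δ) (by linarith) (by linarith) hT
      rw [add_sub_cancel_left] at h1
      have h2 := (hS.norm_le hδ _).trans (ih (by linarith))
      refine (norm_add_le_of_le h1 h2).trans_eq ?_
      push_cast
      ring
  refine norm_le_zero_iff.1 (ge_of_tendsto (tendsto_mul_div_rpow hμ K (t - s) (by linarith)) ?_)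
  filter_upwards [eventually_gt_atTop 0] with N hN0
  have hN0' : (0 : ℝ) < N := by exact_mod_cast hN0
  have e : s + N * ((t - s) / N) = t := by field_simp; ring
  have h := hN N (div_nonneg (sub_nonneg.2 hst) hN0'.le) (e.trans_le ht)
  rwa [e] at h

end IsContractionSemigroup

end Sewing

/-- the sewing map `Λ̂` associated with the heat semigroup on
`L^p(ℝ^n)`.  Given `μ > 1`, `κ ∈ [0,μ]`, and a continuous `h : S_T³ → L^p(ℝ^n)`
which is `δ̂`-closed and satisfies `‖h_{tus}‖ ≤ C (t-u)^κ (u-s)^{μ-κ}`, there is a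
unique continuous `Λh : S_T² → L^p(ℝ^n)` with
`sup ‖(Λh)_{ts}‖/(t-s)^μ < ∞` and `δ̂(Λh) = h`; moreover
`‖(Λh)_{ts}‖ ≤ c C (t-s)^μ` with `c` depending only on `μ` and `T`. -/
theorem twisted_sewing_map
    (n : ℕ) (hn : 1 ≤ n) (p : ℝ) (hp : 1 ≤ p) [Fact (1 ≤ ENNReal.ofReal p)]
    (S : ℝ → LpR n p →L[ℝ] LpR n p)
    (hS0 : S 0 = ContinuousLinearMap.id ℝ (LpR n p))
    (hSheat : ∀ t : ℝ, 0 < t → ∀ φ : LpR n p,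
      ⇑(S t φ) =ᵐ[volume] convol (heatKernel n t) ⇑φ)
    (T : ℝ) (hT : 0 < T) (μ : ℝ) (hμ : 1 < μ) :
    ∃ c : ℝ, 0 < c ∧
      ∀ κ : ℝ, 0 ≤ κ → κ ≤ μ →
      ∀ h : ℝ → ℝ → ℝ → LpR n p,
        ContinuousOn (fun q : ℝ × ℝ × ℝ => h q.1 q.2.1 q.2.2)
          {q : ℝ × ℝ × ℝ | 0 ≤ q.2.2 ∧ q.2.2 ≤ q.2.1 ∧ q.2.1 ≤ q.1 ∧ q.1 ≤ T} →
        (∀ s u v t : ℝ, 0 ≤ s → s ≤ u → u ≤ v → v ≤ t → t ≤ T →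
          S (t - v) (h v u s) - h t u s + h t v s - h t v u = 0) →
      ∀ C : ℝ,
        (∀ s u t : ℝ, 0 ≤ s → s ≤ u → u ≤ t → t ≤ T →
          ‖h t u s‖ ≤ C * (t - u) ^ κ * (u - s) ^ (μ - κ)) →
      ∃ L : ℝ → ℝ → LpR n p,
        ContinuousOn (fun q : ℝ × ℝ => L q.1 q.2)
          {q : ℝ × ℝ | 0 ≤ q.2 ∧ q.2 ≤ q.1 ∧ q.1 ≤ T} ∧
        (∀ s u t : ℝ, 0 ≤ s → s ≤ u → u ≤ t → t ≤ T →
          L t s - L t u - S (t - u) (L u s) = h t u s) ∧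
        (∀ s t : ℝ, 0 ≤ s → s ≤ t → t ≤ T → ‖L t s‖ ≤ c * C * (t - s) ^ μ) ∧
        (∀ L' : ℝ → ℝ → LpR n p,
          ContinuousOn (fun q : ℝ × ℝ => L' q.1 q.2)
            {q : ℝ × ℝ | 0 ≤ q.2 ∧ q.2 ≤ q.1 ∧ q.1 ≤ T} →
          (∃ K : ℝ, ∀ s t : ℝ, 0 ≤ s → s ≤ t → t ≤ T → ‖L' t s‖ ≤ K * (t - s) ^ μ) →
          (∀ s u t : ℝ, 0 ≤ s → s ≤ u → u ≤ t → t ≤ T →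
            L' t s - L' t u - S (t - u) (L' u s) = h t u s) →
          ∀ s t : ℝ, 0 ≤ s → s ≤ t → t ≤ T → L' t s = L t s) := by
  have hS : IsContractionSemigroup S :=
    ⟨fun φ => by simp [hS0], fun hs ht φ => heat_add hS0 hSheat hs ht φ,
      fun ht φ => norm_heat_le hS0 hSheat ht φ, continuousOn_heat hS0 hSheat⟩
  refine ⟨sewingConst μ, sewingConst_pos hμ, fun κ hκ0 hκμ h hhc hclosed C hC => ?_⟩
  have hC0 : 0 ≤ C := by
    have h1 := (norm_nonneg _).trans
      (hC 0 (T / 2) T le_rfl (by linarith) (by linarith) le_rfl)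
    rw [mul_assoc] at h1
    have hu : 0 < T - T / 2 := by linarith
    have hv : 0 < T / 2 - 0 := by linarith
    exact nonneg_of_mul_nonneg_left h1 (by positivity)
  have hbound (s u t : ℝ) (hs : 0 ≤ s) (hsu : s ≤ u) (hut : u ≤ t) (ht : t ≤ T) :
      ‖h t u s‖ ≤ C * (t - s) ^ μ := by
    have h1 : (t - u) ^ κ ≤ (t - s) ^ κ :=
      Real.rpow_le_rpow (by linarith) (by linarith) hκ0
    have h2 : (u - s) ^ (μ - κ) ≤ (t - s) ^ (μ - κ) :=
      Real.rpow_le_rpow (by linarith) (by linarith) (by linarith)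
    have hts : 0 ≤ t - s := by linarith
    have hus : 0 ≤ u - s := by linarith
    calc ‖h t u s‖ ≤ C * (t - u) ^ κ * (u - s) ^ (μ - κ) := hC s u t hs hsu hut ht
      _ ≤ C * (t - s) ^ κ * (t - s) ^ (μ - κ) := by gcongr
      _ = C * (t - s) ^ μ := by
        rw [mul_assoc, ← Real.rpow_add_of_nonneg hts hκ0 (by linarith), add_sub_cancel]
  have hδ (s u t : ℝ) (hs : 0 ≤ s) (hsu : s ≤ u) (hut : u ≤ t) (ht : t ≤ T) :
      -h t s 0 - -h t u 0 - S (t - u) (-h u s 0) = h t u s := by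
    have h1 := hclosed 0 s u t le_rfl hs hsu hut ht
    rw [map_neg, ← sub_eq_zero, ← h1]
    abel
  obtain ⟨I, hIc, hIadd, hIbound⟩ := hS.exists_additive (B := fun t s => -h t s 0) hμ hC0 hT.le
    (hhc.comp (f := fun q : ℝ × ℝ => (q.1, q.2, 0)) (by fun_prop)
      fun q hq => ⟨le_rfl, hq.1, hq.2.1, hq.2.2⟩).neg
    fun s u t hs hsu hut ht => by
      rw [hδ s u t hs hsu hut ht]; exact hbound s u t hs hsu hut ht
  have hL (s u t : ℝ) (hs : 0 ≤ s) (hsu : s ≤ u) (hut : u ≤ t) (ht : t ≤ T) :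
      (-h t s 0 - I t s) - (-h t u 0 - I t u) - S (t - u) (-h u s 0 - I u s) = h t u s := by
    rw [← hδ s u t hs hsu hut ht, ← hIadd s u t hs hsu hut ht, map_sub]
    abel
  refine ⟨fun t s => -h t s 0 - I t s, ?_, hL, hIbound, ?_⟩
  · exact (hhc.comp (f := fun q : ℝ × ℝ => (q.1, q.2, 0)) (by fun_prop)
      fun q hq => ⟨le_rfl, hq.1, hq.2.1, hq.2.2⟩).neg.sub hIc
  · rintro L' - ⟨K, hK⟩ hL' s t hs hst ht
    refine sub_eq_zero.1 (hS.eq_zero_of_additive (T := T) (K := K + sewingConst μ * C) hμ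
      (D := fun t s => L' t s - (-h t s 0 - I t s)) (fun s u t hs hsu hut ht => ?_)
      (fun s t hs hst ht => ?_) hs hst ht)
    · have h1 := (hL' s u t hs hsu hut ht).trans (hL s u t hs hsu hut ht).symm
      rw [← sub_eq_zero] at h1
      rw [← sub_eq_zero, ← neg_eq_zero, ← h1, map_sub]
      abel
    · rw [add_mul]
      exact norm_sub_le_of_le (hK s t hs hst ht) (hIbound s t hs hst ht)
end

section
/- Young integration with respect to the twisted increment (L^p version): let T > 0 and γ, κ ∈ (0,1) with γ + κ > 1. Let X : S_T² → B(L^p(ℝ^n)) be a family of bounded operators with ‖X_{ts}φ‖_{L^p} ≤ C_X (t−s)^γ ‖φ‖_{L^p} for all φ and all s ≤ t, satisfying X_{ts} = X_{tu} + S_{t−u} ∘ X_{us} for all 0 ≤ s ≤ u ≤ t ≤ T, and such that (s,t) ↦ X_{ts}φ is continuous for each φ. Let z : [0,T] → L^p(ℝ^n) be κ-Hölder continuous. Then there exists a unique continuous A : S_T² → L^p(ℝ^n) such that (i) A_{ts} = A_{tu} + S_{t−u}(A_{us}) for all s ≤ u ≤ t, and (ii) sup_{s<t} ‖A_{ts}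 − X_{ts}(z_s)‖_{L^p}/(t−s)^{γ+κ} < ∞. Moreover there is a constant c depending only on γ, κ and T such that sup_{s<t} ‖A_{ts}‖_{L^p}/(t−s)^γ ≤ c C_X (sup_{t} ‖z_t‖_{L^p} + sup_{s<t} ‖z_t − z_s‖_{L^p}/(t−s)^κ), and for every s ≤ t one has A_{ts} = lim Σ_k S_{t−t_{k+1}}( X_{t_{k+1}t_k}(z_{t_k}) ) in L^p(ℝ^n), the limit being over partitions s = t_0 < … < t_m = t of [s,t] as the mesh tends to 0. -/
open MeasureTheory Real
open scoped ENNReal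

/-- The heat kernel is a probability density. -/
theorem lintegral_heatKernel (n : ℕ) {t : ℝ} (ht : 0 < t) :
    ∫⁻ ξ, ENNReal.ofReal (heatKernel n t ξ) = 1 := by
  have hb : 0 < (2 * t)⁻¹ := by positivity
  have hexp : ∀ ξ : EuclideanSpace ℝ (Fin n),
      heatKernel n t ξ = (2 * π * t) ^ (-(n : ℝ) / 2) * rexp (-(2 * t)⁻¹ * ‖ξ‖ ^ 2) := by
    intro ξ
    rw [heatKernel]
    congr 2
    field_simp
  have hint := GaussianFourier.integral_rexp_neg_mul_sq_norm
    (V := EuclideanSpace ℝ (Fin n)) hb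
  have hpos : 0 < (π / (2 * t)⁻¹) ^ ((Module.finrank ℝ (EuclideanSpace ℝ (Fin n)) : ℝ) / 2) := by
    positivity
  have hI : Integrable (fun ξ : EuclideanSpace ℝ (Fin n) => rexp (-(2 * t)⁻¹ * ‖ξ‖ ^ 2)) := by
    by_contra h
    rw [integral_undef h] at hint
    exact hpos.ne hint
  have hnonneg : ∀ ξ, 0 ≤ heatKernel n t ξ := fun ξ => by
    rw [heatKernel]; positivity
  rw [← ofReal_integral_eq_lintegral_ofReal ((hI.const_mul _).congr
    (Filter.Eventually.of_forall fun ξ => (hexp ξ).symm))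
    (Filter.Eventually.of_forall hnonneg)]
  simp_rw [hexp]
  rw [integral_const_mul, hint, finrank_euclideanSpace, Fintype.card_fin,
    show π / (2 * t)⁻¹ = 2 * π * t by field_simp, ← Real.rpow_add (by positivity)]
  simp [neg_div]

/-- Convolution with the heat kernel does not increase the `L^p` norm. -/
theorem eLpNorm_convol_heatKernel_le (n : ℕ) {t p : ℝ} (ht : 0 < t) (hp : 1 ≤ p)
    {φ : EuclideanSpace ℝ (Fin n) → ℝ} (hφ : StronglyMeasurable φ) :
    eLpNorm (convol (heatKernel n t) φ) (ENNReal.ofReal p) volume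
      ≤ eLpNorm φ (ENNReal.ofReal p) volume := by
  have hp0 : 0 < p := by linarith
  have hker : Measurable fun ξ => ENNReal.ofReal (heatKernel n t ξ) := by
    unfold heatKernel; fun_prop
  set μ : Measure (EuclideanSpace ℝ (Fin n)) :=
    volume.withDensity fun ξ => ENNReal.ofReal (heatKernel n t ξ) with hμ
  have : IsProbabilityMeasure μ := ⟨by
    rw [hμ, withDensity_apply _ MeasurableSet.univ, Measure.restrict_univ,
      lintegral_heatKernel n ht]⟩
  have hφm : Measurable φ := hφ.measurable
  rw [eLpNorm_eq_lintegral_rpow_enorm_toReal (by simpa using hp0) ENNReal.ofReal_ne_top,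
    eLpNorm_eq_lintegral_rpow_enorm_toReal (by simpa using hp0) ENNReal.ofReal_ne_top,
    ENNReal.toReal_ofReal hp0.le]
  gcongr ?_ ^ (1 / p)
  calc ∫⁻ ξ, ‖convol (heatKernel n t) φ ξ‖ₑ ^ p
      ≤ ∫⁻ ξ, ∫⁻ η, ‖φ (ξ - η)‖ₑ ^ p ∂μ := by
        refine lintegral_mono fun ξ => ?_
        have hconv : ‖convol (heatKernel n t) φ ξ‖ₑ ≤ ∫⁻ η, ‖φ (ξ - η)‖ₑ ∂μ := by
          refine (enorm_integral_le_lintegral_enorm _).trans_eq ?_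
          rw [hμ, lintegral_withDensity_eq_lintegral_mul _ hker (by fun_prop)]
          refine lintegral_congr fun η => ?_
          rw [enorm_mul, Pi.mul_apply, Real.enorm_of_nonneg]
          rw [heatKernel]; positivity
        have hjensen := eLpNorm'_le_eLpNorm'_of_exponent_le one_pos hp μ
          (f := fun η => φ (ξ - η)) (hφm.comp (by fun_prop)).aestronglyMeasurable
        simp only [eLpNorm', ENNReal.rpow_one, div_one] at hjensen
        calc _ ≤ (∫⁻ η, ‖φ (ξ - η)‖ₑ ∂μ) ^ p := by gcongr
          _ ≤ ((∫⁻ η, ‖φ (ξ - η)‖ₑ ^ p ∂μ) ^ (1 / p)) ^ p := by gcongr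
          _ = _ := by rw [← ENNReal.rpow_mul, one_div, inv_mul_cancel₀ hp0.ne', ENNReal.rpow_one]
    _ = ∫⁻ η, (∫⁻ ξ, ‖φ (ξ - η)‖ₑ ^ p) ∂μ := by
        refine lintegral_lintegral_swap (Measurable.aemeasurable ?_)
        exact ((hφm.comp (measurable_fst.sub measurable_snd)).enorm).pow_const p
    _ = ∫⁻ ξ, ‖φ ξ‖ₑ ^ p := by
        have htrans : ∀ η, ∫⁻ ξ, ‖φ (ξ - η)‖ₑ ^ p = ∫⁻ ξ, ‖φ ξ‖ₑ ^ p :=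
          fun η => lintegral_sub_right_eq_self (fun ξ => ‖φ ξ‖ₑ ^ p) η
        simp [htrans]

theorem exists_ne_zero_LpR (n : ℕ) {p : ℝ} (hp : 1 ≤ p) [Fact (1 ≤ ENNReal.ofReal p)] :
    ∃ φ : LpR n p, φ ≠ 0 := by
  have hfin : volume (Metric.ball (0 : EuclideanSpace ℝ (Fin n)) 1) ≠ ⊤ :=
    measure_ball_lt_top.ne
  refine ⟨indicatorConstLp _ measurableSet_ball hfin 1, fun h => ?_⟩
  have hnorm := congrArg norm h
  rw [norm_indicatorConstLp (by simpa using by linarith) ENNReal.ofReal_ne_top, norm_zero,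
    norm_one, one_mul] at hnorm
  have : 0 < volume.real (Metric.ball (0 : EuclideanSpace ℝ (Fin n)) 1) :=
    ENNReal.toReal_pos (Metric.measure_ball_pos _ _ one_pos).ne' hfin
  exact (Real.rpow_pos_of_pos this _).ne' hnorm

section Sewing

/-- A function on subintervals of `[a, b]` that is subadditive at midpoints and is bounded by a
power larger than one of the length is nonpositive. -/
theorem nonpos_of_midpoint_subadditive {a b K θ : ℝ} (hθ : 1 < θ) {f : ℝ → ℝ → ℝ}
    (hf : ∀ s t, a ≤ s → s ≤ t → t ≤ b → f s t ≤ f s ((s + t) / 2) + f ((s + t) / 2) t)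
    (hK : ∀ s t, a ≤ s → s ≤ t → t ≤ b → f s t ≤ K * (t - s) ^ θ)
    {s t : ℝ} (has : a ≤ s) (hst : s ≤ t) (htb : t ≤ b) : f s t ≤ 0 := by
  have hiter : ∀ m : ℕ, ∀ s t, a ≤ s → s ≤ t → t ≤ b →
      f s t ≤ (K * (t - s) ^ θ) * ((2 : ℝ) ^ (1 - θ)) ^ m := by
    intro m
    induction m with
    | zero => simpa using hK
    | succ m ih =>
      intro s t has hst htb
      have h₁ := ih s ((s + t) / 2) has (by linarith) (by linarith)
      have h₂ := ih ((s + t) / 2) t (by linarith) (by linarith) htb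
      have h₃ : ((t - s) / 2) ^ θ * 2 = (t - s) ^ θ * (2 : ℝ) ^ (1 - θ) := by
        rw [Real.div_rpow (by linarith) zero_le_two, Real.rpow_sub zero_lt_two, Real.rpow_one]
        ring
      rw [show (s + t) / 2 - s = (t - s) / 2 by ring] at h₁
      rw [show t - (s + t) / 2 = (t - s) / 2 by ring] at h₂
      calc f s t ≤ (K * (((t - s) / 2) ^ θ * 2)) * ((2 : ℝ) ^ (1 - θ)) ^ m := by
            linarith [hf s t has hst htb]
        _ = _ := by rw [h₃]; ring
  have hq : (2 : ℝ) ^ (1 - θ) < 1 := Real.rpow_lt_one_of_one_lt_of_neg one_lt_two (by linarith)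
  have hlim := (tendsto_pow_atTop_nhds_zero_of_lt_one (by positivity) hq).const_mul
    (K * (t - s) ^ θ)
  rw [mul_zero] at hlim
  exact ge_of_tendsto' hlim fun m => hiter m s t has hst htb

variable {E : Type*} [NormedAddCommGroup E]

/-- Sums of `Ξ` along the `2 ^ m` equal pieces of an interval. -/
noncomputable def dyadicSum (Ξ : ℝ → ℝ → E) : ℕ → ℝ → ℝ → E
  | 0 => Ξ
  | m + 1 => fun s t => dyadicSum Ξ m s ((s + t) / 2) + dyadicSum Ξ m ((s + t) / 2) t

theorem norm_dyadicSum_succ_sub_le {a b C θ : ℝ} {Ξ : ℝ → ℝ → E}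
    (hΞ : ∀ s u t, a ≤ s → s ≤ u → u ≤ t → t ≤ b →
      ‖Ξ s t - Ξ s u - Ξ u t‖ ≤ C * (t - s) ^ θ) (m : ℕ) :
    ∀ s t, a ≤ s → s ≤ t → t ≤ b →
      ‖dyadicSum Ξ m s t - dyadicSum Ξ (m + 1) s t‖
        ≤ (C * (t - s) ^ θ) * ((2 : ℝ) ^ (1 - θ)) ^ m := by
  induction m with
  | zero =>
    intro s t has hst htb
    simpa [dyadicSum, sub_sub] using hΞ s ((s + t) / 2) t has (by linarith) (by linarith) htb
  | succ m ih =>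
    intro s t has hst htb
    have h₁ := ih s ((s + t) / 2) has (by linarith) (by linarith)
    have h₂ := ih ((s + t) / 2) t (by linarith) (by linarith) htb
    have h₃ : ((t - s) / 2) ^ θ * 2 = (t - s) ^ θ * (2 : ℝ) ^ (1 - θ) := by
      rw [Real.div_rpow (by linarith) zero_le_two, Real.rpow_sub zero_lt_two, Real.rpow_one]
      ring
    rw [show (s + t) / 2 - s = (t - s) / 2 by ring] at h₁
    rw [show t - (s + t) / 2 = (t - s) / 2 by ring] at h₂
    rw [dyadicSum, dyadicSum, add_sub_add_comm]
    calc _ ≤ (C * (((t - s) / 2) ^ θ * 2)) * ((2 : ℝ) ^ (1 - θ)) ^ m := by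
          refine (norm_add_le _ _).trans ?_
          linarith
      _ = _ := by rw [h₃]; ring

theorem continuousOn_dyadicSum {a b : ℝ} {Ξ : ℝ → ℝ → E}
    (hc : ContinuousOn (fun r : ℝ × ℝ => Ξ r.1 r.2) {r | a ≤ r.1 ∧ r.1 ≤ r.2 ∧ r.2 ≤ b}) (m : ℕ) :
    ContinuousOn (fun r : ℝ × ℝ => dyadicSum Ξ m r.1 r.2)
      {r | a ≤ r.1 ∧ r.1 ≤ r.2 ∧ r.2 ≤ b} := by
  induction m with
  | zero => exact hc
  | succ m ih =>
    refine ContinuousOn.add ?_ ?_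
    · refine ih.comp (f := fun r : ℝ × ℝ => (r.1, (r.1 + r.2) / 2)) (by fun_prop) ?_
      rintro r ⟨h₁, h₂, h₃⟩
      exact ⟨h₁, by dsimp only; linarith, by dsimp only; linarith⟩
    · refine ih.comp (f := fun r : ℝ × ℝ => ((r.1 + r.2) / 2, r.2)) (by fun_prop) ?_
      rintro r ⟨h₁, h₂, h₃⟩
      exact ⟨by dsimp only; linarith, by dsimp only; linarith, h₃⟩

/-- An almost additive function differs little from its sum along equal pieces. -/
theorem norm_sub_sum_le_of_almost_additive {a b C θ : ℝ} (hθ : 0 < θ) (hC : 0 ≤ C)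
    {Ξ : ℝ → ℝ → E}
    (hΞ : ∀ s u t, a ≤ s → s ≤ u → u ≤ t → t ≤ b →
      ‖Ξ s t - Ξ s u - Ξ u t‖ ≤ C * (t - s) ^ θ) {s h : ℝ} (has : a ≤ s) (hh : 0 ≤ h) (k : ℕ)
    (hk : s + (k + 1 : ℕ) * h ≤ b) :
    ‖Ξ s (s + (k + 1 : ℕ) * h)
        - ∑ j ∈ Finset.range (k + 1), Ξ (s + j * h) (s + (j + 1 : ℕ) * h)‖
      ≤ k * (C * ((k + 1 : ℕ) * h) ^ θ) := by
  induction k with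
  | zero => simp
  | succ k ih =>
    have hk' : s + (k + 1 : ℕ) * h ≤ s + (k + 1 + 1 : ℕ) * h := by
      push_cast; nlinarith
    have h₁ := ih (hk'.trans hk)
    have h₂ := hΞ s (s + (k + 1 : ℕ) * h) (s + (k + 1 + 1 : ℕ) * h) has
      (le_add_of_nonneg_right (by positivity)) hk' hk
    rw [add_sub_cancel_left] at h₂
    rw [Finset.sum_range_succ]
    have h₃ : ((k + 1 : ℕ) * h) ^ θ ≤ ((k + 1 + 1 : ℕ) * h) ^ θ := by
      gcongr; simp
    calc _ = ‖(Ξ s (s + (k + 1 + 1 : ℕ) * h) - Ξ s (s + (k + 1 : ℕ) * h)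
            - Ξ (s + (k + 1 : ℕ) * h) (s + (k + 1 + 1 : ℕ) * h))
          + (Ξ s (s + (k + 1 : ℕ) * h)
            - ∑ j ∈ Finset.range (k + 1), Ξ (s + j * h) (s + (j + 1 : ℕ) * h))‖ := by
          congr 1; abel
      _ ≤ C * ((k + 1 + 1 : ℕ) * h) ^ θ + k * (C * ((k + 1 : ℕ) * h) ^ θ) :=
          (norm_add_le _ _).trans (add_le_add h₂ h₁)
      _ ≤ C * ((k + 1 + 1 : ℕ) * h) ^ θ + k * (C * ((k + 1 + 1 : ℕ) * h) ^ θ) := by gcongr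
      _ = _ := by push_cast; ring

/-- A midpoint additive function close to an almost additive one is additive along equal pieces. -/
theorem eq_sum_of_midpoint_additive {a b C K θ : ℝ} (hθ : 1 < θ) (hC : 0 ≤ C) (hK : 0 ≤ K)
    {Ξ I : ℝ → ℝ → E}
    (hΞ : ∀ s u t, a ≤ s → s ≤ u → u ≤ t → t ≤ b →
      ‖Ξ s t - Ξ s u - Ξ u t‖ ≤ C * (t - s) ^ θ)
    (hI : ∀ s t, a ≤ s → s ≤ t → t ≤ b → I s t = I s ((s + t) / 2) + I ((s + t) / 2) t)
    (hIΞ : ∀ s t, a ≤ s → s ≤ t → t ≤ b → ‖I s t - Ξ s t‖ ≤ K * (t - s) ^ θ)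
    {s h : ℝ} (has : a ≤ s) (hh : 0 ≤ h) (k : ℕ) (hk : s + k * h ≤ b) :
    I s (s + k * h) = ∑ j ∈ Finset.range k, I (s + j * h) (s + (j + 1 : ℕ) * h) := by
  obtain _ | k := k
  · have h₁ := hI s s has le_rfl (by simpa using hk)
    simp only [add_self_div_two, left_eq_add] at h₁
    simpa using h₁
  let F : ℝ → ℝ → ℝ := fun s t => ‖I s t - ∑ j ∈ Finset.range (k + 1),
    I (s + j * ((t - s) / (k + 1 : ℕ))) (s + (j + 1 : ℕ) * ((t - s) / (k + 1 : ℕ)))‖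
  have hpos : (0 : ℝ) < (k + 1 : ℕ) := by positivity
  have hend : ∀ s t : ℝ, s + (k + 1 : ℕ) * ((t - s) / (k + 1 : ℕ)) = t := by
    intro s t
    field_simp
    ring
  have hpt : ∀ s t : ℝ, s ≤ t → ∀ j < k + 1, s ≤ s + j * ((t - s) / (k + 1 : ℕ)) ∧
      s + j * ((t - s) / (k + 1 : ℕ)) ≤ s + (j + 1 : ℕ) * ((t - s) / (k + 1 : ℕ)) ∧
      s + (j + 1 : ℕ) * ((t - s) / (k + 1 : ℕ)) ≤ t := by
    intro s t hst j hj
    have hh : 0 ≤ (t - s) / (k + 1 : ℕ) := div_nonneg (by linarith) hpos.le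
    refine ⟨le_add_of_nonneg_right (by positivity), by gcongr; simp, ?_⟩
    conv_rhs => rw [← hend s t]
    have : ((j + 1 : ℕ) : ℝ) ≤ (k + 1 : ℕ) := by exact_mod_cast hj
    gcongr
  have hF : F s (s + (k + 1 : ℕ) * h) ≤ 0 := by
    refine nonpos_of_midpoint_subadditive (a := a) (b := b)
      (K := K + k * C + (k + 1 : ℕ) * K) (θ := θ) hθ (f := F) ?_ ?_ has
      (le_add_of_nonneg_right (by positivity)) hk
    · intro s t has hst htb
      have hhalf : ∑ j ∈ Finset.range (k + 1),
            I (s + j * ((t - s) / (k + 1 : ℕ))) (s + (j + 1 : ℕ) * ((t - s) / (k + 1 : ℕ)))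
          = ∑ j ∈ Finset.range ((k + 1) + (k + 1)), I (s + j * ((t - s) / 2 / (k + 1 : ℕ)))
              (s + (j + 1 : ℕ) * ((t - s) / 2 / (k + 1 : ℕ))) := by
        have hpairs : ∀ (f : ℕ → E) (N : ℕ),
            ∑ j ∈ Finset.range (N + N), f j = ∑ j ∈ Finset.range N, (f (2 * j) + f (2 * j + 1)) := by
          intro f N
          induction N with
          | zero => simp
          | succ N ih =>
            rw [show N + 1 + (N + 1) = N + N + 1 + 1 by ring, Finset.sum_range_succ,
              Finset.sum_range_succ, Finset.sum_range_succ, ih, add_assoc, two_mul]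
        rw [hpairs]
        refine Finset.sum_congr rfl fun j hj => ?_
        obtain ⟨g₁, g₂, g₃⟩ := hpt s t hst j (Finset.mem_range.1 hj)
        rw [hI _ _ (has.trans g₁) g₂ (g₃.trans htb)]
        congr 2 <;> · push_cast; ring
      have hsplit : ∑ j ∈ Finset.range ((k + 1) + (k + 1)), I (s + j * ((t - s) / 2 / (k + 1 : ℕ)))
              (s + (j + 1 : ℕ) * ((t - s) / 2 / (k + 1 : ℕ)))
          = ∑ j ∈ Finset.range (k + 1), I (s + j * (((s + t) / 2 - s) / (k + 1 : ℕ)))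
              (s + (j + 1 : ℕ) * (((s + t) / 2 - s) / (k + 1 : ℕ)))
            + ∑ j ∈ Finset.range (k + 1),
              I ((s + t) / 2 + j * ((t - (s + t) / 2) / (k + 1 : ℕ)))
              ((s + t) / 2 + (j + 1 : ℕ) * ((t - (s + t) / 2) / (k + 1 : ℕ))) := by
        rw [Finset.sum_range_add]
        congr 1
        · refine Finset.sum_congr rfl fun j _ => ?_
          congr 1 <;> ring
        · refine Finset.sum_congr rfl fun j _ => ?_
          congr 1
          · push_cast; field_simp; ring
          · push_cast; field_simp; ring
      simp only [F]
      rw [hhalf, hsplit, hI s t has hst htb, add_sub_add_comm]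
      exact norm_add_le _ _
    · intro s t has hst htb
      have hh : 0 ≤ (t - s) / (k + 1 : ℕ) := div_nonneg (by linarith) hpos.le
      have h₁ := norm_sub_sum_le_of_almost_additive (by linarith) hC hΞ has hh k
        (by rw [hend]; exact htb)
      have h₂ := hIΞ s t has hst htb
      have h₃ : ‖∑ j ∈ Finset.range (k + 1),
          (I (s + j * ((t - s) / (k + 1 : ℕ))) (s + (j + 1 : ℕ) * ((t - s) / (k + 1 : ℕ)))
          - Ξ (s + j * ((t - s) / (k + 1 : ℕ))) (s + (j + 1 : ℕ) * ((t - s) / (k + 1 : ℕ))))‖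
          ≤ (k + 1 : ℕ) * (K * (t - s) ^ θ) := by
        refine (norm_sum_le_of_le _ (n := fun _ => K * (t - s) ^ θ) fun j hj => ?_).trans_eq
          (by simp)
        obtain ⟨g₁, g₂, g₃⟩ := hpt s t hst j (Finset.mem_range.1 hj)
        refine (hIΞ _ _ (by linarith) g₂ (by linarith)).trans ?_
        have : 0 ≤ s + (j + 1 : ℕ) * ((t - s) / (k + 1 : ℕ)) - (s + j * ((t - s) / (k + 1 : ℕ))) :=
          by linarith
        gcongr
      rw [Finset.sum_sub_distrib] at h₃
      rw [hend, show ((k + 1 : ℕ) : ℝ) * ((t - s) / (k + 1 : ℕ)) = t - s by field_simp] at h₁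
      have key : ∀ x y u v : E, ‖x - y‖ ≤ ‖x - u‖ + ‖u - v‖ + ‖y - v‖ := by
        intro x y u v
        rw [show x - y = (x - u) + (u - v) - (y - v) by abel]
        exact (norm_sub_le _ _).trans (add_le_add_left (norm_add_le _ _) _)
      refine (key _ _ _ _).trans ((add_le_add (add_le_add h₂ h₁) h₃).trans_eq ?_)
      ring
  have := norm_le_zero_iff.1 hF
  rw [add_sub_cancel_left, show (k + 1 : ℕ) * h / (k + 1 : ℕ) = h by field_simp] at this
  exact sub_eq_zero.1 this

/-- The sewing lemma: a continuous almost additive function of intervals is close to an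
additive one. -/
theorem exists_additive_of_almost_additive [CompleteSpace E] {a b C θ : ℝ} (hθ : 1 < θ)
    (hC : 0 ≤ C) {Ξ : ℝ → ℝ → E}
    (hΞ : ∀ s u t, a ≤ s → s ≤ u → u ≤ t → t ≤ b →
      ‖Ξ s t - Ξ s u - Ξ u t‖ ≤ C * (t - s) ^ θ)
    (hc : ContinuousOn (fun r : ℝ × ℝ => Ξ r.1 r.2) {r | a ≤ r.1 ∧ r.1 ≤ r.2 ∧ r.2 ≤ b}) :
    ∃ I : ℝ → ℝ → E,
      (∀ s u t, a ≤ s → s ≤ u → u ≤ t → t ≤ b → I s t = I s u + I u t) ∧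
      ∀ s t, a ≤ s → s ≤ t → t ≤ b →
        ‖I s t - Ξ s t‖ ≤ C * (1 - (2 : ℝ) ^ (1 - θ))⁻¹ * (t - s) ^ θ := by
  set q : ℝ := (2 : ℝ) ^ (1 - θ) with hq
  have hq1 : q < 1 := Real.rpow_lt_one_of_one_lt_of_neg one_lt_two (by linarith)
  have hq0 : 0 ≤ q := by positivity
  have hdist : ∀ s t, a ≤ s → s ≤ t → t ≤ b → ∀ m,
      dist (dyadicSum Ξ m s t) (dyadicSum Ξ (m + 1) s t) ≤ C * (t - s) ^ θ * q ^ m := by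
    intro s t has hst htb m
    rw [dist_eq_norm]
    exact norm_dyadicSum_succ_sub_le hΞ m s t has hst htb
  obtain ⟨I, hlim⟩ : ∃ I : ℝ → ℝ → E, ∀ s t, a ≤ s → s ≤ t → t ≤ b →
      Filter.Tendsto (fun m => dyadicSum Ξ m s t) Filter.atTop (nhds (I s t)) :=
    ⟨fun s t => Filter.atTop.limUnder fun m => dyadicSum Ξ m s t, fun s t has hst htb =>
      (cauchySeq_of_le_geometric q _ hq1 (hdist s t has hst htb)).tendsto_limUnder⟩
  have hmid : ∀ s t, a ≤ s → s ≤ t → t ≤ b → I s t = I s ((s + t) / 2) + I ((s + t) / 2) t := by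
    intro s t has hst htb
    exact tendsto_nhds_unique ((Filter.tendsto_add_atTop_iff_nat 1).2 (hlim s t has hst htb))
      ((hlim s ((s + t) / 2) has (by linarith) (by linarith)).add
        (hlim ((s + t) / 2) t (by linarith) (by linarith) htb))
  have hclose : ∀ s t, a ≤ s → s ≤ t → t ≤ b →
      ‖I s t - Ξ s t‖ ≤ C * (1 - q)⁻¹ * (t - s) ^ θ := by
    intro s t has hst htb
    have := dist_le_of_le_geometric_of_tendsto₀ q _ hq1 (hdist s t has hst htb)
      (hlim s t has hst htb)
    rw [dist_comm, dist_eq_norm] at this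
    exact this.trans_eq (by ring)
  have hcont : ContinuousOn (fun r : ℝ × ℝ => I r.1 r.2) {r | a ≤ r.1 ∧ r.1 ≤ r.2 ∧ r.2 ≤ b} := by
    refine TendstoUniformlyOn.continuousOn
      (F := fun m (r : ℝ × ℝ) => dyadicSum Ξ m r.1 r.2) (p := Filter.atTop) ?_
      (Filter.Eventually.of_forall fun m => continuousOn_dyadicSum hc m).frequently
    rw [Metric.tendstoUniformlyOn_iff]
    intro ε hε
    have hz : Filter.Tendsto (fun m : ℕ => C * (b - a) ^ θ * q ^ m / (1 - q)) Filter.atTop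
        (nhds 0) := by
      simpa using ((tendsto_pow_atTop_nhds_zero_of_lt_one hq0 hq1).const_mul
        (C * (b - a) ^ θ)).div_const (1 - q)
    filter_upwards [hz.eventually (gt_mem_nhds hε)] with m hm
    rintro r ⟨h₁, h₂, h₃⟩
    rw [dist_comm]
    refine (dist_le_of_le_geometric_of_tendsto q _ hq1 (hdist r.1 r.2 h₁ h₂ h₃)
      (hlim r.1 r.2 h₁ h₂ h₃) m).trans_lt (lt_of_le_of_lt ?_ hm)
    have : 0 ≤ r.2 - r.1 := by linarith
    have : 0 < 1 - q := by linarith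
    gcongr
  have hK : 0 ≤ C * (1 - q)⁻¹ := mul_nonneg hC (inv_nonneg.2 (by linarith))
  refine ⟨I, fun s u t has hsu hut htb => ?_, hclose⟩
  rcases (hsu.trans hut).eq_or_lt with hst | hst
  · obtain rfl : s = u := le_antisymm hsu (hst ▸ hut)
    subst hst
    simpa using hmid s s has le_rfl htb
  have hL : 0 < t - s := by linarith
  set l : ℝ := (u - s) / (t - s) with hl
  have hl0 : 0 ≤ l := div_nonneg (by linarith) hL.le
  have hl1 : l ≤ 1 := (div_le_one hL).2 (by linarith)
  let v : ℕ → ℝ := fun k => s + ⌊l * k⌋₊ * ((t - s) / k)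
  have hv : Filter.Tendsto v Filter.atTop (nhds u) := by
    have h₁ := ((tendsto_nat_floor_mul_div_atTop hl0).comp
      tendsto_natCast_atTop_atTop).mul_const (t - s) |>.const_add s
    rw [show s + l * (t - s) = u by rw [hl]; field_simp; ring] at h₁
    refine h₁.congr fun k => ?_
    simp only [v, Function.comp]
    ring
  have hmem : ∀ k : ℕ, 0 < k → s ≤ v k ∧ v k ≤ t ∧ I s t = I s (v k) + I (v k) t := by
    intro k hk
    have hk' : (0 : ℝ) < k := by exact_mod_cast hk
    have hh : 0 ≤ (t - s) / k := by positivity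
    have hend : s + k * ((t - s) / k) = t := by field_simp; ring
    obtain ⟨i, hi⟩ : ∃ i, k = ⌊l * k⌋₊ + i := by
      refine Nat.exists_eq_add_of_le (Nat.floor_le_of_le ?_)
      nlinarith
    set j := ⌊l * k⌋₊ with hj
    have hvk : v k = s + j * ((t - s) / k) := rfl
    set h := (t - s) / k with hh_def
    have ht : t = s + k * h := hend.symm
    have ht' : t = v k + i * h := by
      rw [ht, hvk, hi]; push_cast; ring
    have hsv : s ≤ v k := by rw [hvk]; exact le_add_of_nonneg_right (by positivity)
    have hvt : v k ≤ t := by rw [ht']; exact le_add_of_nonneg_right (by positivity)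
    refine ⟨hsv, hvt, ?_⟩
    have e₁ := eq_sum_of_midpoint_additive hθ hC hK hΞ hmid hclose has hh k (by rw [hend]; exact htb)
    have e₂ := eq_sum_of_midpoint_additive hθ hC hK hΞ hmid hclose has hh j
      (by rw [← hvk]; linarith)
    have e₃ := eq_sum_of_midpoint_additive hθ hC hK hΞ hmid hclose (has.trans hsv) hh i
      (by rw [← ht']; exact htb)
    rw [← ht] at e₁
    rw [← hvk] at e₂
    rw [← ht'] at e₃
    rw [e₁, e₂, e₃, show Finset.range k = Finset.range (j + i) by rw [← hi], Finset.sum_range_add]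
    congr 1
    refine Finset.sum_congr rfl fun x _ => ?_
    congr 1
    · rw [hvk]; push_cast; ring
    · rw [hvk]; push_cast; ring
  have hev : ∀ᶠ k : ℕ in Filter.atTop, 0 < k := Filter.eventually_gt_atTop 0
  have l₁ : Filter.Tendsto (fun k => I s (v k)) Filter.atTop (nhds (I s u)) := by
    refine (hcont (s, u) ⟨has, hsu, hut.trans htb⟩).tendsto.comp
      (tendsto_nhdsWithin_iff.2 ⟨tendsto_const_nhds.prodMk_nhds hv, ?_⟩)
    filter_upwards [hev] with k hk
    exact ⟨has, (hmem k hk).1, (hmem k hk).2.1.trans htb⟩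
  have l₂ : Filter.Tendsto (fun k => I (v k) t) Filter.atTop (nhds (I u t)) := by
    refine (hcont (u, t) ⟨has.trans hsu, hut, htb⟩).tendsto.comp
      (tendsto_nhdsWithin_iff.2 ⟨hv.prodMk_nhds tendsto_const_nhds, ?_⟩)
    filter_upwards [hev] with k hk
    exact ⟨has.trans (hmem k hk).1, (hmem k hk).2.1, htb⟩
  refine tendsto_nhds_unique (Filter.Tendsto.congr' ?_ tendsto_const_nhds) (l₁.add l₂)
  filter_upwards [hev] with k hk
  exact (hmem k hk).2.2

end Sewing

section Twisted

variable {E : Type*} [NormedAddCommGroup E] [NormedSpace ℝ E]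

/-- A uniformly bounded, strongly continuous family of operators applied to a continuous family
of vectors is continuous. -/
theorem continuousOn_apply_of_strongly_continuous {α : Type*} [TopologicalSpace α] {D : Set α}
    {Y : α → E →L[ℝ] E} {w : α → E} {M : ℝ} (hM : ∀ x ∈ D, ∀ φ, ‖Y x φ‖ ≤ M * ‖φ‖)
    (hY : ∀ φ, ContinuousOn (fun x => Y x φ) D) (hw : ContinuousOn w D) :
    ContinuousOn (fun x => Y x (w x)) D := by
  intro x₀ hx₀
  have h₁ : Filter.Tendsto (fun x => Y x (w x₀)) (nhdsWithin x₀ D) (nhds (Y x₀ (w x₀))) :=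
    hY (w x₀) x₀ hx₀
  have h₂ : Filter.Tendsto (fun x => Y x (w x - w x₀)) (nhdsWithin x₀ D) (nhds 0) := by
    have hz : Filter.Tendsto (fun x => M * ‖w x - w x₀‖) (nhdsWithin x₀ D) (nhds 0) := by
      have := ((hw x₀ hx₀).tendsto.sub_const (w x₀)).norm.const_mul M
      simpa using this
    refine squeeze_zero_norm' ?_ hz
    filter_upwards [self_mem_nhdsWithin] with x hx
    exact hM x hx _
  have h₃ := h₁.add h₂
  simp only [map_sub, add_sub_cancel, add_zero] at h₃
  exact h₃

/-- A function with vanishing twisted increment is approximated by its twisted Riemann sums. -/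
theorem norm_sub_twisted_sum_le {T K θ : ℝ} (hθ : 1 < θ) (hK : 0 ≤ K) {S : ℝ → E →L[ℝ] E}
    (hS0 : S 0 = ContinuousLinearMap.id ℝ E) (hS : ∀ t, 0 ≤ t → ∀ φ, ‖S t φ‖ ≤ ‖φ‖)
    {A Ξ : ℝ → ℝ → E}
    (hA : ∀ s u t : ℝ, 0 ≤ s → s ≤ u → u ≤ t → t ≤ T → A t s = A t u + S (t - u) (A u s))
    (hAΞ : ∀ s t : ℝ, 0 ≤ s → s ≤ t → t ≤ T → ‖A t s - Ξ t s‖ ≤ K * (t - s) ^ θ)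
    {δ : ℝ} {m : ℕ} {σ : ℕ → ℝ} (h0 : 0 ≤ σ 0) (hm : σ m ≤ T)
    (hσ : ∀ k < m, σ k ≤ σ (k + 1)) (hδ : ∀ k < m, σ (k + 1) - σ k ≤ δ) :
    ‖A (σ m) (σ 0) - ∑ k ∈ Finset.range m, S (σ m - σ (k + 1)) (Ξ (σ (k + 1)) (σ k))‖
      ≤ K * δ ^ (θ - 1) * (σ m - σ 0) := by
  have hmono : ∀ i j, i ≤ j → j ≤ m → σ i ≤ σ j := by
    intro i j hij
    induction j, hij using Nat.le_induction with
    | base => exact fun _ => le_rfl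
    | succ j hij ih => exact fun hj => (ih (by omega)).trans (hσ j (by omega))
  have htel : ∀ j ≤ m, A (σ m) (σ 0) = A (σ m) (σ j)
      + ∑ k ∈ Finset.range j, S (σ m - σ (k + 1)) (A (σ (k + 1)) (σ k)) := by
    intro j
    induction j with
    | zero => simp
    | succ j ih =>
      intro hj
      rw [ih (by omega), Finset.sum_range_succ, hA (σ j) (σ (j + 1)) (σ m)
        (h0.trans (hmono 0 j (by omega) (by omega))) (hσ j (by omega)) (hmono _ _ hj le_rfl) hm]
      abel
  have hdiag : A (σ m) (σ m) = 0 := by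
    have := hA (σ m) (σ m) (σ m) (h0.trans (hmono 0 m (by omega) le_rfl)) le_rfl le_rfl hm
    simpa [hS0] using this
  rw [htel m le_rfl, hdiag, zero_add, ← Finset.sum_sub_distrib]
  have hterm : ∀ k ∈ Finset.range m, ‖S (σ m - σ (k + 1)) (A (σ (k + 1)) (σ k))
      - S (σ m - σ (k + 1)) (Ξ (σ (k + 1)) (σ k))‖
      ≤ K * δ ^ (θ - 1) * (σ (k + 1) - σ k) := by
    intro k hk
    rw [Finset.mem_range] at hk
    have hlen : 0 ≤ σ (k + 1) - σ k := sub_nonneg.2 (hσ k hk)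
    have hend := hmono (k + 1) m hk le_rfl
    rw [← map_sub]
    calc _ ≤ K * (σ (k + 1) - σ k) ^ θ :=
          (hS _ (by linarith) _).trans (hAΞ _ _ (h0.trans (hmono 0 k (by omega) (by omega)))
            (hσ k hk) (hend.trans hm))
      _ = K * ((σ (k + 1) - σ k) ^ (θ - 1) * (σ (k + 1) - σ k)) := by
          conv_lhs => rw [show θ = θ - 1 + 1 by ring]
          rw [Real.rpow_add_of_nonneg hlen (by linarith) zero_le_one, Real.rpow_one]
      _ ≤ K * (δ ^ (θ - 1) * (σ (k + 1) - σ k)) := by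
          have := hδ k hk
          have : 0 ≤ θ - 1 := by linarith
          gcongr
      _ = _ := by ring
  refine (norm_sum_le_of_le _ hterm).trans_eq ?_
  rw [← Finset.mul_sum, Finset.sum_range_sub]

/-- The conclusion of `norm_sub_twisted_sum_le` as convergence when the mesh tends to zero,
uniformly over all intervals. -/
theorem exists_mesh_twisted_sum {T K θ : ℝ} (hθ : 1 < θ) (hK : 0 ≤ K)
    {S : ℝ → E →L[ℝ] E}
    (hS0 : S 0 = ContinuousLinearMap.id ℝ E) (hS : ∀ t, 0 ≤ t → ∀ φ, ‖S t φ‖ ≤ ‖φ‖)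
    {A Ξ : ℝ → ℝ → E}
    (hA : ∀ s u t : ℝ, 0 ≤ s → s ≤ u → u ≤ t → t ≤ T → A t s = A t u + S (t - u) (A u s))
    (hAΞ : ∀ s t : ℝ, 0 ≤ s → s ≤ t → t ≤ T → ‖A t s - Ξ t s‖ ≤ K * (t - s) ^ θ)
    {ε : ℝ} (hε : 0 < ε) :
    ∃ δ : ℝ, 0 < δ ∧ ∀ s t : ℝ, 0 ≤ s → s ≤ t → t ≤ T →
      ∀ (m : ℕ) (σ : ℕ → ℝ), σ 0 = s → σ m = t →
        (∀ k < m, σ k ≤ σ (k + 1)) → (∀ k < m, σ (k + 1) - σ k ≤ δ) →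
        ‖A t s - ∑ k ∈ Finset.range m, S (t - σ (k + 1)) (Ξ (σ (k + 1)) (σ k))‖ < ε := by
  have hlim : Filter.Tendsto (fun δ : ℝ => K * δ ^ (θ - 1) * T) (nhdsWithin 0 (Set.Ioi 0))
      (nhds 0) := by
    have h := ((Real.continuous_rpow_const (q := θ - 1) (by linarith)).tendsto 0).const_mul K
      |>.mul_const T
    rw [Real.zero_rpow (by linarith), mul_zero, zero_mul] at h
    exact h.mono_left nhdsWithin_le_nhds
  obtain ⟨δ, hδε, hδ⟩ := ((hlim.eventually (gt_mem_nhds hε)).and self_mem_nhdsWithin).exists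
  refine ⟨δ, hδ, ?_⟩
  rintro s t hs hst ht m σ rfl rfl hσ hmesh
  refine (norm_sub_twisted_sum_le hθ hK hS0 hS hA hAΞ hs ht hσ hmesh).trans_lt
    (lt_of_le_of_lt ?_ hδε)
  have hδ' : 0 ≤ δ := le_of_lt hδ
  gcongr
  linarith

/-- Twisted Young integration with respect to a family of contractions on a Banach space. -/
theorem exists_twisted_young_integral [CompleteSpace E]
    {γ κ : ℝ} (hγ0 : 0 < γ) (hκ0 : 0 < κ) (hγκ : 1 < γ + κ) {T : ℝ} (hT : 0 < T)
    {S : ℝ → E →L[ℝ] E}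
    (hS0 : S 0 = ContinuousLinearMap.id ℝ E) (hS : ∀ t, 0 ≤ t → ∀ φ, ‖S t φ‖ ≤ ‖φ‖)
    {X : ℝ → ℝ → E →L[ℝ] E} {CX : ℝ} (hCX : 0 ≤ CX)
    (hXγ : ∀ s t : ℝ, 0 ≤ s → s ≤ t → t ≤ T → ∀ φ : E, ‖X t s φ‖ ≤ CX * (t - s) ^ γ * ‖φ‖)
    (hX : ∀ s u t : ℝ, 0 ≤ s → s ≤ u → u ≤ t → t ≤ T →
      X t s = X t u + (S (t - u)).comp (X u s))
    (hXc : ∀ φ : E, ContinuousOn (fun r : ℝ × ℝ => X r.1 r.2 φ)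
      {r : ℝ × ℝ | 0 ≤ r.2 ∧ r.2 ≤ r.1 ∧ r.1 ≤ T})
    {z : ℝ → E} {Cz : ℝ} (hCz : 0 ≤ Cz)
    (hz : ∀ s t : ℝ, 0 ≤ s → s ≤ t → t ≤ T → ‖z t - z s‖ ≤ Cz * (t - s) ^ κ) :
    ∃ A : ℝ → ℝ → E,
      ContinuousOn (fun r : ℝ × ℝ => A r.1 r.2) {r : ℝ × ℝ | 0 ≤ r.2 ∧ r.2 ≤ r.1 ∧ r.1 ≤ T} ∧
      (∀ s u t : ℝ, 0 ≤ s → s ≤ u → u ≤ t → t ≤ T → A t s = A t u + S (t - u) (A u s)) ∧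
      (∀ s t : ℝ, 0 ≤ s → s ≤ t → t ≤ T → ‖A t s - X t s (z s)‖
        ≤ CX * Cz * (1 - (2 : ℝ) ^ (1 - (γ + κ)))⁻¹ * (t - s) ^ (γ + κ)) := by
  have hXapp : ∀ s u t : ℝ, 0 ≤ s → s ≤ u → u ≤ t → t ≤ T → ∀ φ,
      X t s φ - X t u φ = S (t - u) (X u s φ) := by
    intro s u t hs hsu hut ht φ
    rw [hX s u t hs hsu hut ht]
    simp
  have hXdiag : ∀ t, 0 ≤ t → t ≤ T → ∀ φ, X t t φ = 0 := by
    intro t ht0 ht φ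
    have := hXapp t t t ht0 le_rfl le_rfl ht φ
    simpa [hS0] using this.symm
  have hq1 : (2 : ℝ) ^ (1 - (γ + κ)) < 1 :=
    Real.rpow_lt_one_of_one_lt_of_neg one_lt_two (by linarith)
  have hK : 0 ≤ CX * Cz * (1 - (2 : ℝ) ^ (1 - (γ + κ)))⁻¹ :=
    mul_nonneg (mul_nonneg hCX hCz) (inv_nonneg.2 (by linarith))
  set K : ℝ := CX * Cz * (1 - (2 : ℝ) ^ (1 - (γ + κ)))⁻¹ with hKdef
  have hbound : ∀ r ∈ {r : ℝ × ℝ | 0 ≤ r.2 ∧ r.2 ≤ r.1 ∧ r.1 ≤ T}, ∀ φ,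
      ‖X r.1 r.2 φ‖ ≤ CX * T ^ γ * ‖φ‖ := by
    rintro r ⟨h₁, h₂, h₃⟩ φ
    refine (hXγ r.2 r.1 h₁ h₂ h₃ φ).trans ?_
    have : 0 ≤ r.1 - r.2 := by linarith
    gcongr
    linarith
  have hzc : ContinuousOn z (Set.Icc 0 T) := by
    intro t₀ ht₀
    have hlim : Filter.Tendsto (fun t => Cz * |t - t₀| ^ κ) (nhdsWithin t₀ (Set.Icc 0 T))
        (nhds 0) := by
      have h : Continuous fun t : ℝ => Cz * |t - t₀| ^ κ := by
        have := Real.continuous_rpow_const (q := κ) hκ0.le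
        fun_prop
      have := (h.tendsto t₀).mono_left (nhdsWithin_le_nhds (s := Set.Icc 0 T))
      simpa [Real.zero_rpow hκ0.ne'] using this
    rw [ContinuousWithinAt, tendsto_iff_norm_sub_tendsto_zero]
    refine squeeze_zero' (Filter.Eventually.of_forall fun _ => norm_nonneg _) ?_ hlim
    filter_upwards [self_mem_nhdsWithin] with t ht
    rcases le_total t₀ t with h | h
    · rw [abs_of_nonneg (by linarith)]
      exact hz t₀ t ht₀.1 h ht.2
    · rw [abs_of_nonpos (by linarith), norm_sub_rev, neg_sub]
      exact hz t t₀ ht.1 h ht₀.2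
  have hXz : ∀ {D : Set (ℝ × ℝ)} {f g w : ℝ × ℝ → ℝ}, Continuous f → Continuous g →
      Continuous w → (∀ r ∈ D, 0 ≤ g r ∧ g r ≤ f r ∧ f r ≤ T) → (∀ r ∈ D, w r ∈ Set.Icc 0 T) →
      ContinuousOn (fun r => X (f r) (g r) (z (w r))) D := by
    intro D f g w hf hg hw hfg hwD
    refine continuousOn_apply_of_strongly_continuous (Y := fun r => X (f r) (g r))
      (w := fun r => z (w r)) (M := CX * T ^ γ)
      (fun r hr φ => hbound (f r, g r) (hfg r hr) φ) (fun φ => ?_)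
      (hzc.comp hw.continuousOn hwD)
    exact (hXc φ).comp (f := fun r => (f r, g r)) (by fun_prop) hfg
  have hI : ∀ t, ∃ I : ℝ → ℝ → E, 0 ≤ t → t ≤ T →
      (∀ r u v, 0 ≤ r → r ≤ u → u ≤ v → v ≤ t → I r v = I r u + I u v) ∧
      ∀ r v, 0 ≤ r → r ≤ v → v ≤ t →
        ‖I r v - (X t r (z r) - X t v (z r))‖ ≤ K * (v - r) ^ (γ + κ) := by
    intro t
    by_cases ht : 0 ≤ t ∧ t ≤ T
    swap
    · exact ⟨0, fun h₁ h₂ => absurd ⟨h₁, h₂⟩ ht⟩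
    obtain ⟨ht0, htT⟩ := ht
    obtain ⟨I, h₁, h₂⟩ := exists_additive_of_almost_additive (a := 0) (b := t) (C := CX * Cz)
      (θ := γ + κ) hγκ (mul_nonneg hCX hCz) (Ξ := fun r v => X t r (z r) - X t v (z r)) (by
        intro r u v hr hru huv hv
        have e : X t r (z r) - X t v (z r) - (X t r (z r) - X t u (z r))
            - (X t u (z u) - X t v (z u)) = S (t - v) (X v u (z r - z u)) := by
          rw [← hXapp u v t (by linarith) huv hv htT]
          simp only [map_sub]
          abel
        rw [e]
        have h₁ := hS (t - v) (by linarith) (X v u (z r - z u))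
        have h₂ := hXγ u v (by linarith) huv (by linarith) (z r - z u)
        have h₃ := hz r u hr hru (by linarith)
        rw [norm_sub_rev] at h₃
        have hvu : 0 ≤ v - u := by linarith
        have hur : 0 ≤ u - r := by linarith
        have hvr : 0 ≤ v - r := by linarith
        calc _ ≤ CX * (v - u) ^ γ * (Cz * (u - r) ^ κ) :=
              h₁.trans (h₂.trans (by gcongr))
          _ ≤ CX * (v - r) ^ γ * (Cz * (v - r) ^ κ) := by gcongr
          _ = CX * Cz * (v - r) ^ (γ + κ) := by
              rw [Real.rpow_add_of_nonneg hvr hγ0.le hκ0.le]; ring)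
      (by
        refine ContinuousOn.sub
          (hXz (f := fun _ => t) (g := fun r => r.1) (w := fun r => r.1) (by fun_prop)
            (by fun_prop) (by fun_prop) ?_ ?_)
          (hXz (f := fun _ => t) (g := fun r => r.2) (w := fun r => r.1) (by fun_prop)
            (by fun_prop) (by fun_prop) ?_ ?_) <;>
        · rintro r ⟨h₁, h₂, h₃⟩
          constructor <;> first | linarith | constructor <;> linarith)
    exact ⟨I, fun _ _ => ⟨h₁, h₂⟩⟩
  choose I hI using hI
  have hclose : ∀ s t : ℝ, 0 ≤ s → s ≤ t → t ≤ T →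
      ‖I t s t - X t s (z s)‖ ≤ K * (t - s) ^ (γ + κ) := by
    intro s t hs hst ht
    have := (hI t (hs.trans hst) ht).2 s t hs hst le_rfl
    rwa [hXdiag t (hs.trans hst) ht, sub_zero] at this
  have hadd : ∀ s u t : ℝ, 0 ≤ s → s ≤ u → u ≤ t → t ≤ T →
      I t s t = I t u t + S (t - u) (I u s u) := by
    intro s u t hs hsu hut ht
    obtain ⟨a₁, b₁⟩ := hI t (hs.trans (hsu.trans hut)) ht
    obtain ⟨a₂, b₂⟩ := hI u (hs.trans hsu) (hut.trans ht)
    have hzero : ‖I t s u - S (t - u) (I u s u)‖ ≤ 0 := by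
      refine nonpos_of_midpoint_subadditive (a := 0) (b := u) (K := 2 * K) (θ := γ + κ) hγκ
        (f := fun r v => ‖I t r v - S (t - u) (I u r v)‖) ?_ ?_ hs hsu le_rfl
      · intro r v hr hrv hv
        rw [a₁ r ((r + v) / 2) v hr (by linarith) (by linarith) (by linarith),
          a₂ r ((r + v) / 2) v hr (by linarith) (by linarith) (by linarith), map_add,
          add_sub_add_comm]
        exact norm_add_le _ _
      · intro r v hr hrv hv
        have e : X t r (z r) - X t v (z r) = S (t - u) (X u r (z r) - X u v (z r)) := by
          rw [map_sub, ← hXapp r u t hr (by linarith) hut ht,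
            ← hXapp v u t (by linarith) hv hut ht]
          abel
        have g₁ := b₁ r v hr hrv (by linarith)
        have g₂ := (hS (t - u) (by linarith) _).trans (b₂ r v hr hrv hv)
        rw [map_sub, ← e] at g₂
        calc _ = ‖(I t r v - (X t r (z r) - X t v (z r)))
              - (S (t - u) (I u r v) - (X t r (z r) - X t v (z r)))‖ := by
              congr 1; abel
          _ ≤ K * (v - r) ^ (γ + κ) + K * (v - r) ^ (γ + κ) :=
              (norm_sub_le _ _).trans (add_le_add g₁ g₂)
          _ = _ := by ring
    rw [a₁ s u t hs hsu hut le_rfl, sub_eq_zero.1 (norm_le_zero_iff.1 hzero), add_comm]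
  refine ⟨fun t s => I t s t, ?_, hadd, hclose⟩
  refine continuousOn_of_uniform_approx_of_continuousOn fun U hU => ?_
  obtain ⟨ε, hε, hεU⟩ := Metric.mem_uniformity_dist.1 hU
  obtain ⟨δ, hδ, hsum⟩ := exists_mesh_twisted_sum (A := fun t s => I t s t)
    (Ξ := fun t s => X t s (z s)) hγκ hK hS0 hS hadd hclose hε
  obtain ⟨m, hm⟩ := exists_nat_gt (T / δ)
  have hm0 : (0 : ℝ) < m := (div_nonneg hT.le hδ.le).trans_lt hm
  have hmesh : T / m ≤ δ := by
    rw [div_lt_iff₀ hδ] at hm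
    rw [div_le_iff₀ hm0]
    linarith
  let σ : ℝ × ℝ → ℕ → ℝ := fun r k => r.2 + k * ((r.1 - r.2) / m)
  have hσ0 : ∀ r, σ r 0 = r.2 := fun r => by simp [σ]
  have hσm : ∀ r, σ r m = r.1 := fun r => by
    simp only [σ]; field_simp; ring
  have hstep : ∀ r k, σ r (k + 1) = σ r k + (r.1 - r.2) / m := fun r k => by
    simp only [σ]; push_cast; ring
  have hσD : ∀ r ∈ {r : ℝ × ℝ | 0 ≤ r.2 ∧ r.2 ≤ r.1 ∧ r.1 ≤ T}, ∀ k ≤ m,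
      0 ≤ σ r k ∧ σ r k ≤ r.1 := by
    rintro r ⟨h₁, h₂, h₃⟩ k hk
    have hlen : 0 ≤ (r.1 - r.2) / m := div_nonneg (by linarith) hm0.le
    refine ⟨add_nonneg h₁ (by positivity), ?_⟩
    conv_rhs => rw [← hσm r]
    simp only [σ]
    gcongr
  have hσc : ∀ k, Continuous fun r => σ r k := fun k => by
    simp only [σ]; fun_prop
  refine ⟨fun r => ∑ k ∈ Finset.range m,
    (X r.1 (σ r k) (z (σ r k)) - X r.1 (σ r (k + 1)) (z (σ r k))), ?_, ?_⟩
  · refine continuousOn_finsetSum _ fun k hk => ?_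
    rw [Finset.mem_range] at hk
    refine ContinuousOn.sub
      (hXz continuous_fst (hσc k) (hσc k) (fun r hr => ?_) (fun r hr => ?_))
      (hXz continuous_fst (hσc (k + 1)) (hσc k) (fun r hr => ?_) (fun r hr => ?_))
    · exact ⟨(hσD r hr k hk.le).1, (hσD r hr k hk.le).2, hr.2.2⟩
    · exact ⟨(hσD r hr k hk.le).1, (hσD r hr k hk.le).2.trans hr.2.2⟩
    · exact ⟨(hσD r hr (k + 1) hk).1, (hσD r hr (k + 1) hk).2, hr.2.2⟩
    · exact ⟨(hσD r hr k hk.le).1, (hσD r hr k hk.le).2.trans hr.2.2⟩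
  · intro r hr
    have hlen : 0 ≤ (r.1 - r.2) / m := div_nonneg (by linarith [hr.2.1]) hm0.le
    have hlen' : (r.1 - r.2) / m ≤ δ := by
      refine le_trans ?_ hmesh
      gcongr
      linarith [hr.1, hr.2.2]
    refine hεU ?_
    rw [dist_eq_norm]
    have hlt := hsum r.2 r.1 hr.1 hr.2.1 hr.2.2 m (σ r) (hσ0 r) (hσm r)
      (fun k _ => by rw [hstep]; linarith) (fun k _ => by rw [hstep]; linarith)
    refine lt_of_eq_of_lt (congrArg (fun x => ‖I r.1 r.2 r.1 - x‖) ?_) hlt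
    refine Finset.sum_congr rfl fun k hk => ?_
    rw [Finset.mem_range] at hk
    exact hXapp _ _ _ (hσD r hr k hk.le).1 (by rw [hstep]; linarith) (hσD r hr (k + 1) hk).2
      hr.2.2 _

end Twisted

/-- Young integration with respect to the twisted increment.
Given `γ, κ ∈ (0,1)` with `γ + κ > 1` and `T > 0`, there is a constant `c`
(depending only on `γ, κ, T`) such that for any family `X : S_T² → B(L^p(ℝ^n))`
with `‖X_{ts}φ‖ ≤ C_X (t-s)^γ ‖φ‖`, `δ̂X = 0` and `(s,t) ↦ X_{ts}φ` continuous,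
and any `κ`-Hölder path `z` in `L^p(ℝ^n)` (bounded by `Mz`, Hölder constant
`Cz`), there is a unique continuous `A : S_T² → L^p(ℝ^n)` with
`δ̂A = 0` and `‖A_{ts} - X_{ts}(z_s)‖ = O((t-s)^{γ+κ})`; moreover
`‖A_{ts}‖ ≤ c C_X (Mz + Cz) (t-s)^γ`, and `A_{ts}` is the limit of the Riemann
sums `Σ_k S_{t-t_{k+1}}(X_{t_{k+1}t_k}(z_{t_k}))` as the mesh tends to `0`. -/
theorem twisted_young_integral
    (γ κ : ℝ) (hγ0 : 0 < γ) (hγ1 : γ < 1) (hκ0 : 0 < κ) (hκ1 : κ < 1)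
    (hγκ : 1 < γ + κ) (T : ℝ) (hT : 0 < T) :
    ∃ c : ℝ, 0 < c ∧
      ∀ (n : ℕ), 1 ≤ n → ∀ (p : ℝ), 1 ≤ p → ∀ [Fact (1 ≤ ENNReal.ofReal p)],
      ∀ (S : ℝ → LpR n p →L[ℝ] LpR n p),
        S 0 = ContinuousLinearMap.id ℝ (LpR n p) →
        (∀ t : ℝ, 0 < t → ∀ φ : LpR n p,
          ⇑(S t φ) =ᵐ[volume] convol (heatKernel n t) ⇑φ) →
      ∀ (X : ℝ → ℝ → (LpR n p →L[ℝ] LpR n p)) (CX : ℝ),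
        (∀ s t : ℝ, 0 ≤ s → s ≤ t → t ≤ T → ∀ φ : LpR n p,
          ‖X t s φ‖ ≤ CX * (t - s) ^ γ * ‖φ‖) →
        (∀ s u t : ℝ, 0 ≤ s → s ≤ u → u ≤ t → t ≤ T →
          X t s = X t u + (S (t - u)).comp (X u s)) →
        (∀ φ : LpR n p, ContinuousOn (fun r : ℝ × ℝ => X r.1 r.2 φ)
          {r : ℝ × ℝ | 0 ≤ r.2 ∧ r.2 ≤ r.1 ∧ r.1 ≤ T}) →
      ∀ (z : ℝ → LpR n p) (Mz Cz : ℝ),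
        (∀ t : ℝ, 0 ≤ t → t ≤ T → ‖z t‖ ≤ Mz) →
        (∀ s t : ℝ, 0 ≤ s → s ≤ t → t ≤ T → ‖z t - z s‖ ≤ Cz * (t - s) ^ κ) →
      ∃ A : ℝ → ℝ → LpR n p,
        ContinuousOn (fun r : ℝ × ℝ => A r.1 r.2)
          {r : ℝ × ℝ | 0 ≤ r.2 ∧ r.2 ≤ r.1 ∧ r.1 ≤ T} ∧
        (∀ s u t : ℝ, 0 ≤ s → s ≤ u → u ≤ t → t ≤ T →
          A t s = A t u + S (t - u) (A u s)) ∧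
        (∃ K : ℝ, ∀ s t : ℝ, 0 ≤ s → s ≤ t → t ≤ T →
          ‖A t s - X t s (z s)‖ ≤ K * (t - s) ^ (γ + κ)) ∧
        (∀ A' : ℝ → ℝ → LpR n p,
          ContinuousOn (fun r : ℝ × ℝ => A' r.1 r.2)
            {r : ℝ × ℝ | 0 ≤ r.2 ∧ r.2 ≤ r.1 ∧ r.1 ≤ T} →
          (∀ s u t : ℝ, 0 ≤ s → s ≤ u → u ≤ t → t ≤ T →
            A' t s = A' t u + S (t - u) (A' u s)) →
          (∃ K' : ℝ, ∀ s t : ℝ, 0 ≤ s → s ≤ t → t ≤ T →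
            ‖A' t s - X t s (z s)‖ ≤ K' * (t - s) ^ (γ + κ)) →
          ∀ s t : ℝ, 0 ≤ s → s ≤ t → t ≤ T → A' t s = A t s) ∧
        (∀ s t : ℝ, 0 ≤ s → s ≤ t → t ≤ T →
          ‖A t s‖ ≤ c * CX * (Mz + Cz) * (t - s) ^ γ) ∧
        (∀ s t : ℝ, 0 ≤ s → s ≤ t → t ≤ T →
          ∀ ε : ℝ, 0 < ε → ∃ δ : ℝ, 0 < δ ∧
            ∀ (m : ℕ) (σ : ℕ → ℝ), 0 < m → σ 0 = s → σ m = t →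
              (∀ k < m, σ k ≤ σ (k + 1)) → (∀ k < m, σ (k + 1) - σ k ≤ δ) →
              ‖A t s - ∑ k ∈ Finset.range m,
                  S (t - σ (k + 1)) (X (σ (k + 1)) (σ k) (z (σ k)))‖ < ε) := by
  have hq1 : (2 : ℝ) ^ (1 - (γ + κ)) < 1 :=
    Real.rpow_lt_one_of_one_lt_of_neg one_lt_two (by linarith)
  have hq : 0 < (1 - (2 : ℝ) ^ (1 - (γ + κ)))⁻¹ := inv_pos.2 (by linarith)
  set q : ℝ := (1 - (2 : ℝ) ^ (1 - (γ + κ)))⁻¹ with hqdef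
  refine ⟨1 + q * T ^ κ, by positivity, ?_⟩
  intro n _ p hp _ S hS0 hSconv X CX hXγ hX hXc z Mz Cz hMz hz
  have hS : ∀ t, 0 ≤ t → ∀ φ : LpR n p, ‖S t φ‖ ≤ ‖φ‖ := by
    intro t ht φ
    rcases ht.eq_or_lt with rfl | ht
    · simp [hS0]
    · rw [Lp.norm_def, Lp.norm_def, eLpNorm_congr_ae (hSconv t ht φ)]
      exact ENNReal.toReal_mono (Lp.eLpNorm_ne_top φ)
        (eLpNorm_convol_heatKernel_le n ht hp (Lp.stronglyMeasurable φ))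
  have hCX : 0 ≤ CX := by
    obtain ⟨φ, hφ⟩ := exists_ne_zero_LpR n hp
    have h := (norm_nonneg _).trans (hXγ 0 T le_rfl hT.le le_rfl φ)
    have hTγ : 0 < (T - 0) ^ γ := Real.rpow_pos_of_pos (by linarith) _
    exact nonneg_of_mul_nonneg_left (nonneg_of_mul_nonneg_left h (norm_pos_iff.2 hφ)) hTγ
  have hCz : 0 ≤ Cz :=
    nonneg_of_mul_nonneg_left ((norm_nonneg _).trans (hz 0 T le_rfl hT.le le_rfl))
      (Real.rpow_pos_of_pos (by linarith) _)
  have hMz0 : 0 ≤ Mz := (norm_nonneg _).trans (hMz 0 le_rfl hT.le)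
  have hK : 0 ≤ CX * Cz * q := by positivity
  obtain ⟨A, hAc, hA, hAX⟩ :=
    exists_twisted_young_integral hγ0 hκ0 hγκ hT hS0 hS hCX hXγ hX hXc hCz hz
  refine ⟨A, hAc, hA, ⟨_, hAX⟩, ?_, ?_, ?_⟩
  · rintro A' - hA' ⟨K', hK'⟩ s t hs hst ht
    have hzero : ‖A' t s - A t s‖ ≤ 0 := by
      refine nonpos_of_midpoint_subadditive (a := 0) (b := T) (K := K' + CX * Cz * q)
        (θ := γ + κ) hγκ (f := fun s t => ‖A' t s - A t s‖) ?_ ?_ hs hst ht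
      · intro r v hr hrv hv
        rw [hA r ((r + v) / 2) v hr (by linarith) (by linarith) hv,
          hA' r ((r + v) / 2) v hr (by linarith) (by linarith) hv, add_sub_add_comm, ← map_sub,
          add_comm ‖A' ((r + v) / 2) r - A ((r + v) / 2) r‖]
        exact (norm_add_le _ _).trans (add_le_add le_rfl (hS _ (by linarith) _))
      · intro r v hr hrv hv
        have h₁ := hK' r v hr hrv hv
        have h₂ := hAX r v hr hrv hv
        calc _ = ‖(A' v r - X v r (z r)) - (A v r - X v r (z r))‖ := by
              rw [sub_sub_sub_cancel_right]
          _ ≤ K' * (v - r) ^ (γ + κ) + CX * Cz * q * (v - r) ^ (γ + κ) :=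
              (norm_sub_le _ _).trans (add_le_add h₁ h₂)
          _ = _ := by ring
    exact sub_eq_zero.1 (norm_le_zero_iff.1 hzero)
  · intro s t hs hst ht
    have hts : 0 ≤ t - s := by linarith
    have hX₁ : ‖X t s (z s)‖ ≤ CX * (t - s) ^ γ * Mz :=
      (hXγ s t hs hst ht _).trans (by gcongr; exact hMz s hs (hst.trans ht))
    have hA₁ : ‖A t s - X t s (z s)‖ ≤ CX * Cz * q * ((t - s) ^ γ * T ^ κ) := by
      refine (hAX s t hs hst ht).trans ?_
      rw [Real.rpow_add_of_nonneg hts hγ0.le hκ0.le]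
      gcongr
      linarith
    have hnonneg : 0 ≤ CX * (t - s) ^ γ * (Cz + q * T ^ κ * Mz) := by positivity
    calc ‖A t s‖ = ‖X t s (z s) + (A t s - X t s (z s))‖ := by rw [add_sub_cancel]
      _ ≤ CX * (t - s) ^ γ * Mz + CX * Cz * q * ((t - s) ^ γ * T ^ κ) :=
          (norm_add_le _ _).trans (add_le_add hX₁ hA₁)
      _ ≤ CX * (t - s) ^ γ * Mz + CX * Cz * q * ((t - s) ^ γ * T ^ κ)
            + CX * (t - s) ^ γ * (Cz + q * T ^ κ * Mz) := le_add_of_nonneg_right hnonneg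
      _ = _ := by ring
  · intro s t hs hst ht ε hε
    obtain ⟨δ, hδ, h⟩ := exists_mesh_twisted_sum (Ξ := fun t s => X t s (z s)) hγκ hK hS0 hS
      hA hAX hε
    exact ⟨δ, hδ, fun m σ _ h0 hm hσ hmesh => h s t hs hst ht m σ h0 hm hσ hmesh⟩
end
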